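/- arXiv:1606.00272 — 2 statements merged into one kernel-verified Lean document; each statement's English description precedes it below -/
import Mathlib

section
/- For every n ≥ 4, the functor St(n,−) satisfies the dilation principle: for every commutative ring A, every non-nilpotent a ∈ A, and every g ∈ St(n, A[X]) with (ev_{X=0})_*(g) = 1 ∈ St(n,A) and (λ_a)_*(g) = 1 ∈ St(n, A_a[X]), there exists m ≥ 0 such that (ev_{X=a^mY})_*(g) = 1 ∈ St(n, A[Y]). -/
open scoped commutatorElement

/-- Generators of the Steinberg group: triples (i,j,r) with i ≠ j. -/
abbrev StGen (n : ℕ) (R : Type) : Type := {p : Fin n × Fin n // p.1 ≠ p.2} × R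

/-- The Steinberg relations. -/
inductive StRels (n : ℕ) (R : Type) [CommRing R] : FreeGroup (StGen n R) → Prop
  | add (i j : Fin n) (hij : i ≠ j) (r s : R) :
      StRels n R (FreeGroup.of (⟨(i, j), hij⟩, r) * FreeGroup.of (⟨(i, j), hij⟩, s) *
        (FreeGroup.of (⟨(i, j), hij⟩, r + s))⁻¹)
  | commZero (i j h k : Fin n) (hij : i ≠ j) (hhk : h ≠ k) (hjh : j ≠ h) (hik : i ≠ k) (r s : R) :
      StRels n R ⁅(FreeGroup.of (⟨(i, j), hij⟩, r) : FreeGroup (StGen n R)), FreeGroup.of (⟨(h, k), hhk⟩, s)⁆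
  | commAdd (i j k : Fin n) (hij : i ≠ j) (hjk : j ≠ k) (hik : i ≠ k) (r s : R) :
      StRels n R (⁅(FreeGroup.of (⟨(i, j), hij⟩, r) : FreeGroup (StGen n R)), FreeGroup.of (⟨(j, k), hjk⟩, s)⁆ *
        (FreeGroup.of (⟨(i, k), hik⟩, r * s))⁻¹)

/-- The Steinberg group `St(n, R)`. -/
abbrev SteinbergGroup (n : ℕ) (R : Type) [CommRing R] : Type :=
  PresentedGroup {w | StRels n R w}

/-- The generator `x_{ij}(r)` of the Steinberg group. -/
def stx (n : ℕ) (R : Type) [CommRing R] (i j : Fin n) (hij : i ≠ j) (r : R) :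
    SteinbergGroup n R :=
  PresentedGroup.of (⟨(i, j), hij⟩, r)

/-- The dilation principle for the functor `St(n, -)`. -/
def DilationPrinciple (n : ℕ) : Prop :=
  ∀ (A : Type) [CommRing A] (a : A), ¬ IsNilpotent a →
  ∀ g : SteinbergGroup n (Polynomial A),
  ∀ (ev0 : SteinbergGroup n (Polynomial A) →* SteinbergGroup n A),
    (∀ (i j : Fin n) (hij : i ≠ j) (p : Polynomial A),
      ev0 (stx n (Polynomial A) i j hij p) = stx n A i j hij (Polynomial.eval 0 p)) →
    ev0 g = 1 →
  ∀ (la : SteinbergGroup n (Polynomial A) →*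
      SteinbergGroup n (Polynomial (Localization.Away a))),
    (∀ (i j : Fin n) (hij : i ≠ j) (p : Polynomial A),
      la (stx n (Polynomial A) i j hij p) =
        stx n (Polynomial (Localization.Away a)) i j hij
          (p.map (algebraMap A (Localization.Away a)))) →
    la g = 1 →
  ∃ m : ℕ, ∀ (ev : SteinbergGroup n (Polynomial A) →* SteinbergGroup n (Polynomial A)),
    (∀ (i j : Fin n) (hij : i ≠ j) (p : Polynomial A),
      ev (stx n (Polynomial A) i j hij p) =
        stx n (Polynomial A) i j hij (p.comp (Polynomial.C (a ^ m) * Polynomial.X))) →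
    ev g = 1

/-!
Let `D = A[X]`, `R = A_a[X]` and let `I` be the non-unital ring of polynomials over `R` in a
variable `t` with positive rational exponents. Any two elements of `I` are multiples of a common
regular element `t ^ e`. This divisibility replaces the unit of a ring in commutator calculations:
in `St(I)`, for `n ≥ 4`, a root subgroup can be recovered from the other ones. Hence each
elementary matrix `1 + c e_{pq}` with `c ∈ R` or `c ∈ D` acts on `St(I)`, although there is no
formula for its effect on the opposite root `(q, p)`. These actions together with left translations
represent `St(D ⊕ I)` by permutations of `St(I)`; therefore `St(I)` embeds into `St(D ⊕ I)`, with
image the kernel of the projection to `St(D)`, and likewise for `R`.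

Substitute `X ↦ X t` in `g`. The result lies in the kernel `St(I)` of `St(D ⊕ I) → St(D)`, and it
is trivial in `St(R ⊕ I)` since `g` is trivial over `A_a`; so it is trivial in `St(D ⊕ I)`.
Finally `t ^ q ↦ a ^ (q * k!)` maps `D ⊕ I` to the ring of germs at `k = ∞` of sequences in `D`,
because for large `k` the exponents are integers that absorb all denominators. Hence the image of
`g` under `X ↦ a ^ k! X` is trivial for all large `k`.
-/

section Commutators

variable {G : Type*} [Group G] {a b c d : G}

theorem commute_commutator_left (hac : Commute a c) (hbc : Commute b c) : Commute ⁅a, b⁆ c := by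
  rw [commutatorElement_def]
  exact ((hac.mul_left hbc).mul_left hac.inv_left).mul_left hbc.inv_left

theorem commutator_mul_left_of_commute (h : Commute a ⁅b, c⁆) :
    ⁅a * b, c⁆ = ⁅b, c⁆ * ⁅a, c⁆ := by
  rw [commutatorElement_mul_left_eq_conj_mul, h.mul_inv_cancel]

theorem commutator_mul_right_of_commute (h : Commute b ⁅a, c⁆) :
    ⁅a, b * c⁆ = ⁅a, b⁆ * ⁅a, c⁆ := by
  rw [commutatorElement_mul_right_eq_mul_conj, mul_assoc ⁅a, b⁆, mul_assoc ⁅a, b⁆,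
    h.mul_inv_cancel]

theorem commutator_mul_left_eq_of_commute (h : Commute b c) : ⁅a * b, c⁆ = ⁅a, c⁆ := by
  rw [commutator_mul_left_of_commute] <;> simp [h.commutator_eq]

theorem commutator_mul_right_eq_of_commute (h : Commute a c) : ⁅a, b * c⁆ = ⁅a, b⁆ := by
  rw [commutator_mul_right_of_commute] <;> simp [h.commutator_eq]

theorem commutator_mul_mul_of_commute (habc : Commute a ⁅b, c⁆) (habd : Commute a ⁅b, d⁆)
    (hcad : Commute c ⁅a, d⁆) (hcbd : Commute c ⁅b, d⁆) :
    ⁅a * b, c * d⁆ = ⁅b, c⁆ * ⁅b, d⁆ * (⁅a, c⁆ * ⁅a, d⁆) := by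
  have hb : ⁅b, c * d⁆ = ⁅b, c⁆ * ⁅b, d⁆ := commutator_mul_right_of_commute hcbd
  rw [commutator_mul_left_of_commute (hb ▸ habc.mul_right habd), hb,
    commutator_mul_right_of_commute hcad]

theorem commute_mul_mul_of_commutator_mul_eq_one (hac : Commute a c) (hbd : Commute b d)
    (ha : Commute a ⁅b, c⁆) (hc : Commute c ⁅a, d⁆) (h : ⁅b, c⁆ * ⁅a, d⁆ = 1) :
    Commute (a * b) (c * d) := by
  rw [← commutatorElement_eq_one_iff_commute, commutator_mul_mul_of_commute ha _ hc] <;>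
    simp [hac.commutator_eq, hbd.commutator_eq, h]

theorem commute_commutator_of_commute_commutator (hbd : Commute b d) (ha : Commute ⁅d, a⁆ a)
    (hb : Commute ⁅d, a⁆ b) : Commute ⁅a, b⁆ d := by
  have hconj_a : d * a * d⁻¹ = ⁅d, a⁆ * a := by rw [commutatorElement_def]; group
  have hconj_b : d * b * d⁻¹ = b := hbd.symm.mul_inv_cancel
  have hconj : d * ⁅a, b⁆ * d⁻¹ = ⁅a, b⁆ := by
    rw [conjugate_commutatorElement, hconj_a, hconj_b,
      commutator_mul_left_of_commute (commute_commutator_left ha.symm hb.symm).symm,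
      hb.commutator_eq, mul_one]
  exact (mul_inv_eq_iff_eq_mul.1 hconj).symm

/-- A degenerate Hall–Witt identity. -/
theorem commutator_commutator_eq_of_commute (hac : Commute a c) (habc : Commute ⁅a, b⁆ ⁅b, c⁆)
    (hbc : Commute c ⁅b, c⁆) : ⁅a, ⁅b, c⁆⁆ = ⁅⁅a, b⁆, c⁆ := by
  have hconj_b : a * b * a⁻¹ = ⁅a, b⁆ * b := by rw [commutatorElement_def]; group
  have hconj_c : a * c * a⁻¹ = c := hac.mul_inv_cancel
  have hconj : a * ⁅b, c⁆ * a⁻¹ = ⁅b, c⁆ * ⁅⁅a, b⁆, c⁆ := by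
    rw [conjugate_commutatorElement, hconj_b, hconj_c, commutator_mul_left_of_commute habc]
  rw [commutatorElement_def, hconj, (commute_commutator_left habc hbc).symm.mul_inv_cancel]

end Commutators

theorem exists_ne_of_four_le_card {ι : Type*} (hι : 4 ≤ ENat.card ι) (i j k : ι) :
    ∃ l, l ≠ i ∧ l ≠ j ∧ l ≠ k := by
  by_contra! h
  have huniv : (Set.univ : Set ι) ⊆ {i, j, k} := fun l _ => by
    by_cases hi : l = i
    · simp [hi]
    · by_cases hj : l = j
      · simp [hj]
      · simp [h l hi hj]
  have hcard : ENat.card ι ≤ 3 := by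
    rw [← Set.encard_univ]
    grw [huniv, Set.encard_insert_le, Set.encard_insert_le, Set.encard_singleton]
    norm_num
  exact absurd (hι.trans hcard) (by norm_num)

/-- A family of elements of a group satisfying the Steinberg relations with parameters in `I`.
The values `y i i r` on the diagonal are unconstrained. -/
structure IsSteinbergSystem {ι I H : Type*} [Add I] [Mul I] [Group H] (y : ι → ι → I → H) :
    Prop where
  add {i j : ι} (hij : i ≠ j) (r s : I) : y i j (r + s) = y i j r * y i j s
  commute {i j h k : ι} (hij : i ≠ j) (hhk : h ≠ k) (hjh : j ≠ h) (hik : i ≠ k) (r s : I) :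
    Commute (y i j r) (y h k s)
  commutator {i j k : ι} (hij : i ≠ j) (hjk : j ≠ k) (hik : i ≠ k) (r s : I) :
    ⁅y i j r, y j k s⁆ = y i k (r * s)

/-- A family of elements of a group satisfying the Steinberg relations that do not mention the
root `(p, q)`. -/
structure IsSteinbergSystemOff {ι I H : Type*} [Add I] [Mul I] [Group H] (p q : ι)
    (y : ι → ι → I → H) : Prop where
  ne : p ≠ q
  add {i j : ι} (hij : i ≠ j) (hoff : (i, j) ≠ (p, q)) (r s : I) :
    y i j (r + s) = y i j r * y i j s
  commute {i j h k : ι} (hij : i ≠ j) (hhk : h ≠ k) (hjh : j ≠ h) (hik : i ≠ k)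
    (hoff₁ : (i, j) ≠ (p, q)) (hoff₂ : (h, k) ≠ (p, q)) (r s : I) : Commute (y i j r) (y h k s)
  commutator {i j k : ι} (hij : i ≠ j) (hjk : j ≠ k) (hik : i ≠ k) (hoff₁ : (i, j) ≠ (p, q))
    (hoff₂ : (j, k) ≠ (p, q)) (hoff₃ : (i, k) ≠ (p, q)) (r s : I) :
    ⁅y i j r, y j k s⁆ = y i k (r * s)

/-- Any two elements have a common right factor that can be cancelled on the right. This is what
replaces the unit of the ring in the arguments below. -/
class HasCommonRightFactors (I : Type*) [Mul I] : Prop where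
  exists_common_factor (s t : I) :
    ∃ e s' t' : I, IsRightRegular e ∧ s = s' * e ∧ t = t' * e

theorem exists_eq_mul {I : Type*} [Mul I] [HasCommonRightFactors I] (t : I) :
    ∃ u v, t = u * v := by
  obtain ⟨e, u, -, -, ht, -⟩ := HasCommonRightFactors.exists_common_factor t t
  exact ⟨u, e, ht⟩

/-- `Y` is a candidate for the root subgroup of the missing root `(p, q)`: it is what all the
commutators that ought to lie in it evaluate to. -/
def IsMissingRoot {ι I H : Type*} [Mul I] [Group H] (p q : ι) (y : ι → ι → I → H) (Y : I → H) :
    Prop :=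
  ∀ ⦃l : ι⦄, l ≠ p → l ≠ q → ∀ s t, ⁅y p l s, y l q t⁆ = Y (s * t)

section Elimination

variable {ι I H : Type*} [NonUnitalRing I] [Group H] {p q : ι} {y : ι → ι → I → H} {Y : I → H}

namespace IsSteinbergSystemOff

variable (hy : IsSteinbergSystemOff p q y)
include hy

theorem commutator_change_middle {l m : ι} (hlp : l ≠ p) (hlq : l ≠ q) (hmp : m ≠ p)
    (hmq : m ≠ q) (hlm : l ≠ m) (s u v : I) :
    ⁅y p l s, y l q (u * v)⁆ = ⁅y p m (s * u), y m q v⁆ := by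
  have hpq := hy.ne
  have hpm : ⁅y p l s, y l m u⁆ = y p m (s * u) := by apply hy.commutator <;> grind
  have hlq' : ⁅y l m u, y m q v⁆ = y l q (u * v) := by apply hy.commutator <;> grind
  rw [← hpm, ← hlq']
  apply commutator_commutator_eq_of_commute
  · apply hy.commute <;> grind
  · rw [hpm, hlq']; apply hy.commute <;> grind
  · rw [hlq']; apply hy.commute <;> grind

variable (hι : 4 ≤ ENat.card ι) [HasCommonRightFactors I]
include hι

theorem commutator_mul_right {l : ι} (hlp : l ≠ p) (hlq : l ≠ q) (s x t : I) :
    ⁅y p l s, y l q (x * t)⁆ = ⁅y p l (s * x), y l q t⁆ := by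
  obtain ⟨m, hmp, hmq, hml⟩ := exists_ne_of_four_le_card hι p q l
  obtain ⟨u, v, rfl⟩ := exists_eq_mul x
  rw [mul_assoc, hy.commutator_change_middle hlp hlq hmp hmq hml.symm,
    hy.commutator_change_middle hmp hmq hlp hlq hml, mul_assoc]

theorem commutator_eq_of_mul_eq {l : ι} (hlp : l ≠ p) (hlq : l ≠ q) {s t s' t' : I}
    (h : s * t = s' * t') : ⁅y p l s, y l q t⁆ = ⁅y p l s', y l q t'⁆ := by
  obtain ⟨e, t₁, t₁', he, rfl, rfl⟩ := HasCommonRightFactors.exists_common_factor t t'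
  have hcancel : s * t₁ = s' * t₁' := he (by simpa only [mul_assoc] using h)
  rw [hy.commutator_mul_right hι hlp hlq, hy.commutator_mul_right hι hlp hlq, hcancel]

theorem exists_isMissingRoot : ∃ Y, IsMissingRoot p q y Y := by
  obtain ⟨l, hlp, hlq, -⟩ := exists_ne_of_four_le_card hι p q q
  choose u v huv using exists_eq_mul (I := I)
  refine ⟨fun t => ⁅y p l (u t), y l q (v t)⁆, fun m hmp hmq s t => ?_⟩
  obtain rfl | hlm := eq_or_ne l m
  · exact hy.commutator_eq_of_mul_eq hι hlp hlq (huv _)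
  · conv_lhs => rw [huv t, hy.commutator_change_middle hmp hmq hlp hlq hlm.symm]
    apply hy.commutator_eq_of_mul_eq hι hlp hlq
    rw [mul_assoc, ← huv, ← huv]

end IsSteinbergSystemOff

namespace IsMissingRoot

variable (hY : IsMissingRoot p q y Y) (hy : IsSteinbergSystemOff p q y)
  (hι : 4 ≤ ENat.card ι) [HasCommonRightFactors I]
include hY hy hι

theorem commute_row {k : ι} (hkp : k ≠ p) (hkq : k ≠ q) (t r : I) : Commute (Y t) (y p k r) := by
  have hpq := hy.ne
  obtain ⟨l, hlp, hlq, hlk⟩ := exists_ne_of_four_le_card hι p q k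
  obtain ⟨u, v, rfl⟩ := exists_eq_mul t
  rw [← hY hlp hlq]
  apply commute_commutator_left <;> apply hy.commute <;> grind

theorem commute_column {k : ι} (hkp : k ≠ p) (hkq : k ≠ q) (t r : I) :
    Commute (Y t) (y k q r) := by
  have hpq := hy.ne
  obtain ⟨l, hlp, hlq, hlk⟩ := exists_ne_of_four_le_card hι p q k
  obtain ⟨u, v, rfl⟩ := exists_eq_mul t
  rw [← hY hlp hlq]
  apply commute_commutator_left <;> apply hy.commute <;> grind

omit hι in
theorem commute_disjoint {h k : ι} (hhk : h ≠ k) (hhp : h ≠ p) (hhq : h ≠ q) (hkp : k ≠ p)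
    (hkq : k ≠ q) (t r : I) : Commute (Y t) (y h k r) := by
  have hpq := hy.ne
  obtain ⟨u, v, rfl⟩ := exists_eq_mul t
  have hpk : ⁅y p h u, y h k r⁆ = y p k (u * r) := by apply hy.commutator <;> grind
  rw [← hY hhp hhq]
  apply commute_commutator_of_commute_commutator
  · apply hy.commute <;> grind
  all_goals
    rw [← commutatorElement_inv, hpk]
    apply Commute.inv_left
    apply hy.commute <;> grind

theorem commute {h k : ι} (hhk : h ≠ k) (hqh : q ≠ h) (hpk : p ≠ k) (hoff : (h, k) ≠ (p, q))
    (t r : I) : Commute (Y t) (y h k r) := by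
  obtain rfl | hhp := eq_or_ne h p
  · exact hY.commute_row hy hι hpk.symm (by grind) t r
  obtain rfl | hkq := eq_or_ne k q
  · exact hY.commute_column hy hι hhp hhk t r
  · exact hY.commute_disjoint hy hhk hhp hqh.symm hpk.symm hkq t r

theorem commute_self (s t : I) : Commute (Y s) (Y t) := by
  obtain ⟨l, hlp, hlq, -⟩ := exists_ne_of_four_le_card hι p q q
  obtain ⟨u, v, rfl⟩ := exists_eq_mul t
  rw [← hY hlp hlq]
  exact (commute_commutator_left (hY.commute_row hy hι hlp hlq s u).symm
    (hY.commute_column hy hι hlp hlq s v).symm).symm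

theorem commutator_left {k : ι} (hkp : k ≠ p) (hkq : k ≠ q) (t r : I) :
    ⁅Y t, y q k r⁆ = y p k (t * r) := by
  have hpq := hy.ne
  obtain ⟨l, hlp, hlq, hlk⟩ := exists_ne_of_four_le_card hι p q k
  obtain ⟨u, v, rfl⟩ := exists_eq_mul t
  have hlk' : ⁅y l q v, y q k r⁆ = y l k (v * r) := by apply hy.commutator <;> grind
  rw [← hY hlp hlq, ← commutator_commutator_eq_of_commute, hlk', mul_assoc]
  · apply hy.commutator <;> grind
  · apply hy.commute <;> grind
  · rw [hlk', hY hlp hlq]; apply hY.commute hy hι <;> grind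
  · rw [hlk']; apply hy.commute <;> grind

theorem commutator_right {k : ι} (hkp : k ≠ p) (hkq : k ≠ q) (r t : I) :
    ⁅y k p r, Y t⁆ = y k q (r * t) := by
  obtain ⟨l, hlp, hlq, hlk⟩ := exists_ne_of_four_le_card hι p q k
  obtain ⟨u, v, rfl⟩ := exists_eq_mul t
  have hkl : ⁅y k p r, y p l u⁆ = y k l (r * u) := by apply hy.commutator <;> grind
  rw [← hY hlp hlq, commutator_commutator_eq_of_commute, hkl, ← mul_assoc]
  · apply hy.commutator <;> grind
  · apply hy.commute <;> grind
  · rw [hkl, hY hlp hlq]; apply (hY.commute hy hι _ _ _ _ _ _).symm <;> grind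
  · rw [hY hlp hlq]; exact (hY.commute_column hy hι hlp hlq _ _).symm

theorem add (s t : I) : Y (s + t) = Y s * Y t := by
  obtain ⟨l, hlp, hlq, -⟩ := exists_ne_of_four_le_card hι p q q
  obtain ⟨e, s', t', -, rfl, rfl⟩ := HasCommonRightFactors.exists_common_factor s t
  have hadd : y p l (s' + t') = y p l s' * y p l t' := by apply hy.add <;> grind
  have hcomm : Commute (y p l s') ⁅y p l t', y l q e⁆ := by
    rw [hY hlp hlq]
    exact (hY.commute_row hy hι hlp hlq _ _).symm
  rw [← add_mul, ← hY hlp hlq, hadd, commutator_mul_left_of_commute hcomm, hY hlp hlq, hY hlp hlq,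
    (hY.commute_self hy hι _ _).eq]

open scoped Classical in
theorem isSteinbergSystem_extend :
    IsSteinbergSystem fun i j => if (i, j) = (p, q) then Y else y i j where
  add hij r s := by
    split_ifs with hroot
    · exact hY.add hy hι r s
    · exact hy.add hij hroot r s
  commute hij hhk hjh hik r s := by
    split_ifs with h₁ h₂ h₂
    · exact hY.commute_self hy hι r s
    · apply hY.commute hy hι <;> grind
    · apply (hY.commute hy hι _ _ _ _ _ _).symm <;> grind
    · exact hy.commute hij hhk hjh hik h₁ h₂ r s
  commutator hij hjk hik r s := by
    split_ifs with h₁ h₂ h₃ h₃ h₂ h₃ h₃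
    any_goals grind
    · obtain ⟨rfl, rfl⟩ := Prod.ext_iff.1 h₁
      exact hY.commutator_left hy hι hik.symm hjk.symm r s
    · obtain ⟨rfl, rfl⟩ := Prod.ext_iff.1 h₂
      exact hY.commutator_right hy hι hij hik r s
    · obtain ⟨rfl, rfl⟩ := Prod.ext_iff.1 h₃
      exact hY hij.symm hjk r s
    · exact hy.commutator hij hjk hik h₁ h₂ h₃ r s

end IsMissingRoot

theorem IsSteinbergSystemOff.exists_extension [HasCommonRightFactors I] (hι : 4 ≤ ENat.card ι)
    (hy : IsSteinbergSystemOff p q y) :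
    ∃ z : ι → ι → I → H, IsSteinbergSystem z ∧ ∀ i j, (i, j) ≠ (p, q) → z i j = y i j := by
  classical
  obtain ⟨Y, hY⟩ := hy.exists_isMissingRoot hι
  exact ⟨_, hY.isSteinbergSystem_extend hy hι, fun i j hoff => if_neg hoff⟩

end Elimination

/-- Pairs of a root `(i, j)`, `i ≠ j`, and a parameter in `I`. -/
abbrev SteinbergGenerator (ι I : Type*) : Type _ := {p : ι × ι // p.1 ≠ p.2} × I

/-- The Steinberg relations `StRels` for an arbitrary index type `ι` and for parameters in a
not necessarily unital or commutative ring. -/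
inductive SteinbergRelation (ι I : Type*) [Add I] [Mul I] :
    FreeGroup (SteinbergGenerator ι I) → Prop
  | add (i j : ι) (hij : i ≠ j) (r s : I) :
      SteinbergRelation ι I (FreeGroup.of (⟨(i, j), hij⟩, r) * FreeGroup.of (⟨(i, j), hij⟩, s) *
        (FreeGroup.of (⟨(i, j), hij⟩, r + s))⁻¹)
  | commute (i j h k : ι) (hij : i ≠ j) (hhk : h ≠ k) (hjh : j ≠ h) (hik : i ≠ k) (r s : I) :
      SteinbergRelation ι I ⁅(FreeGroup.of (⟨(i, j), hij⟩, r) : FreeGroup (SteinbergGenerator ι I)),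
        FreeGroup.of (⟨(h, k), hhk⟩, s)⁆
  | commutator (i j k : ι) (hij : i ≠ j) (hjk : j ≠ k) (hik : i ≠ k) (r s : I) :
      SteinbergRelation ι I
        (⁅(FreeGroup.of (⟨(i, j), hij⟩, r) : FreeGroup (SteinbergGenerator ι I)),
          FreeGroup.of (⟨(j, k), hjk⟩, s)⁆ * (FreeGroup.of (⟨(i, k), hik⟩, r * s))⁻¹)

/-- The Steinberg group of a not necessarily unital or commutative ring. -/
abbrev NonUnitalSteinbergGroup (ι I : Type*) [Add I] [Mul I] : Type _ :=
  PresentedGroup {w | SteinbergRelation ι I w}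

namespace IsSteinbergSystem

variable {ι I J H K : Type*} [Group H] [Group K] {y : ι → ι → I → H}

theorem map_zero [AddGroup I] [Mul I] (hy : IsSteinbergSystem y) {i j : ι} (hij : i ≠ j) :
    y i j 0 = 1 := by
  simpa using hy.add hij 0 0

theorem map_neg [AddGroup I] [Mul I] (hy : IsSteinbergSystem y) {i j : ι} (hij : i ≠ j) (r : I) :
    y i j (-r) = (y i j r)⁻¹ := by
  rw [eq_inv_iff_mul_eq_one, ← hy.add hij, neg_add_cancel, hy.map_zero hij]

theorem commutator_swap [AddGroup I] [Mul I] (hy : IsSteinbergSystem y) {i j k : ι}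
    (hij : i ≠ j) (hjk : j ≠ k) (hik : i ≠ k) (r s : I) :
    ⁅y j k s, y i j r⁆ = y i k (-(r * s)) := by
  rw [← commutatorElement_inv, hy.commutator hij hjk hik, hy.map_neg hik]

theorem comp [Add I] [Mul I] [Add J] [Mul J] (hy : IsSteinbergSystem y) {F : Type*}
    [FunLike F J I] [AddHomClass F J I] [MulHomClass F J I] (f : F) :
    IsSteinbergSystem fun i j r => y i j (f r) where
  add hij r s := by rw [map_add, hy.add hij]
  commute hij hhk hjh hik r s := hy.commute hij hhk hjh hik (f r) (f s)
  commutator hij hjk hik r s := by rw [hy.commutator hij hjk hik, map_mul]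

theorem monoidHom_comp [Add I] [Mul I] (hy : IsSteinbergSystem y) (f : H →* K) :
    IsSteinbergSystem fun i j r => f (y i j r) where
  add hij r s := by rw [hy.add hij, map_mul]
  commute hij hhk hjh hik r s := (hy.commute hij hhk hjh hik r s).map f
  commutator hij hjk hik r s := by rw [← map_commutatorElement, hy.commutator hij hjk hik]

end IsSteinbergSystem

namespace NonUnitalSteinbergGroup

variable {ι I J K H : Type*} [Add I] [Mul I] [Add J] [Mul J] [Add K] [Mul K] [Group H]

open scoped Classical in
/-- The generator `x_{ij}(r)`, with junk value `1` for `i = j`. -/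
noncomputable def x (i j : ι) (r : I) : NonUnitalSteinbergGroup ι I :=
  if hij : i ≠ j then PresentedGroup.of (⟨(i, j), hij⟩, r) else 1

theorem x_of_ne {i j : ι} (hij : i ≠ j) (r : I) :
    x i j r = PresentedGroup.of (⟨(i, j), hij⟩, r) :=
  dif_pos hij

@[simp]
theorem x_self (i : ι) (r : I) : x i i r = 1 :=
  dif_neg (not_not_intro rfl)

theorem isSteinbergSystem_x :
    IsSteinbergSystem (x : ι → ι → I → NonUnitalSteinbergGroup ι I) where
  add {i j} hij r s := by
    simp only [x_of_ne hij]
    exact (mul_inv_eq_one.1 (PresentedGroup.one_of_mem (SteinbergRelation.add i j hij r s))).symm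
  commute {i j h k} hij hhk hjh hik r s := by
    rw [x_of_ne hij, x_of_ne hhk]
    exact commutatorElement_eq_one_iff_commute.1
      (PresentedGroup.one_of_mem (SteinbergRelation.commute i j h k hij hhk hjh hik r s))
  commutator {i j k} hij hjk hik r s := by
    rw [x_of_ne hij, x_of_ne hjk, x_of_ne hik]
    exact mul_inv_eq_one.1
      (PresentedGroup.one_of_mem (SteinbergRelation.commutator i j k hij hjk hik r s))

theorem closure_range_x :
    Subgroup.closure {g | ∃ i j, i ≠ j ∧ ∃ r, x i j r = g} =
      (⊤ : Subgroup (NonUnitalSteinbergGroup ι I)) := by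
  rw [← PresentedGroup.closure_range_of]
  congr 1
  ext g
  constructor
  · rintro ⟨i, j, hij, r, rfl⟩
    exact ⟨_, (x_of_ne hij r).symm⟩
  · rintro ⟨⟨⟨⟨i, j⟩, hij⟩, r⟩, rfl⟩
    exact ⟨i, j, hij, r, x_of_ne hij r⟩

theorem hom_ext {f g : NonUnitalSteinbergGroup ι I →* H}
    (h : ∀ i j, i ≠ j → ∀ r, f (x i j r) = g (x i j r)) : f = g :=
  MonoidHom.eq_of_eqOn_dense closure_range_x <| by
    rintro _ ⟨i, j, hij, r, rfl⟩
    exact h i j hij r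

/-- The homomorphism determined by a family satisfying the Steinberg relations. -/
def lift {y : ι → ι → I → H} (hy : IsSteinbergSystem y) : NonUnitalSteinbergGroup ι I →* H :=
  PresentedGroup.toGroup (f := fun g => y g.1.1.1 g.1.1.2 g.2) <| by
    rintro _ (⟨i, j, hij, r, s⟩ | ⟨i, j, h, k, hij, hhk, hjh, hik, r, s⟩ |
      ⟨i, j, k, hij, hjk, hik, r, s⟩)
    · simp [hy.add hij]
    · simpa [commutatorElement_eq_one_iff_commute] using hy.commute hij hhk hjh hik r s
    · simp [hy.commutator hij hjk hik]

theorem lift_x {y : ι → ι → I → H} (hy : IsSteinbergSystem y) {i j : ι} (hij : i ≠ j) (r : I) :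
    lift hy (x i j r) = y i j r := by
  rw [x_of_ne hij, lift, PresentedGroup.toGroup.of]

section Map

variable {F G G' : Type*} [FunLike F I J] [AddHomClass F I J] [MulHomClass F I J]

/-- The homomorphism of Steinberg groups induced by a homomorphism of the parameter rings. -/
noncomputable def map (f : F) : NonUnitalSteinbergGroup ι I →* NonUnitalSteinbergGroup ι J :=
  lift (isSteinbergSystem_x.comp f)

@[simp]
theorem map_x (f : F) (i j : ι) (r : I) : map f (x i j r) = x i j (f r) := by
  obtain rfl | hij := eq_or_ne i j
  · simp
  · exact lift_x _ hij r

theorem map_map [FunLike G J K] [AddHomClass G J K] [MulHomClass G J K]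
    [FunLike G' I K] [AddHomClass G' I K] [MulHomClass G' I K] (g : G) (f : F) (h : G')
    (hgf : ∀ r, g (f r) = h r) (u : NonUnitalSteinbergGroup ι I) : map g (map f u) = map h u := by
  suffices (map g).comp (map f) = map h from DFunLike.congr_fun this u
  exact hom_ext fun i j _ r => by simp [hgf]

end Map

end NonUnitalSteinbergGroup

/-- The effect of conjugation by `x_{pq}(c)` on a Steinberg system. It has no closed formula on
the root `(q, p)`, where the value is junk. -/
noncomputable def twist {ι R I H : Type*} [SMul R I] [Neg I] [Mul H] (y : ι → ι → I → H)
    (p q : ι) (c : R) (i j : ι) (r : I) : H :=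
  open scoped Classical in
  if i = q then y q j r * y p j (c • r) else
  if j = p then y i p r * y i q (-(c • r)) else y i j r

section Twist

variable {ι R I H : Type*} [CommRing R] [NonUnitalRing I] [Module R I] [Group H]
  (y : ι → ι → I → H) (p q : ι) (c : R)

theorem twist_row (j : ι) (r : I) : twist y p q c q j r = y q j r * y p j (c • r) :=
  if_pos rfl

theorem twist_column {i : ι} (hiq : i ≠ q) (r : I) :
    twist y p q c i p r = y i p r * y i q (-(c • r)) := by
  rw [twist, if_neg hiq, if_pos rfl]

theorem twist_of_ne {i j : ι} (hiq : i ≠ q) (hjp : j ≠ p) (r : I) :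
    twist y p q c i j r = y i j r := by
  rw [twist, if_neg hiq, if_neg hjp]

namespace IsSteinbergSystem

variable {y p q} (hy : IsSteinbergSystem y)
include hy

theorem twist_add {i j : ι} (hij : i ≠ j) (hoff : (i, j) ≠ (q, p)) (r s : I) :
    twist y p q c i j (r + s) = twist y p q c i j r * twist y p q c i j s := by
  obtain rfl | hiq := eq_or_ne i q
  · have hjp : p ≠ j := by grind
    simp only [twist_row, smul_add, hy.add hij, hy.add hjp]
    exact (hy.commute hij hjp (by grind) hij s _).mul_mul_mul_comm _ _
  obtain rfl | hjp := eq_or_ne j p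
  · simp only [twist_column y _ _ _ hiq, smul_add, neg_add, hy.add hij, hy.add hiq]
    exact (hy.commute hij hiq hij.symm hiq s _).mul_mul_mul_comm _ _
  · simp only [twist_of_ne y _ _ _ hiq hjp, hy.add hij]

variable [IsScalarTower R I I] [SMulCommClass R I I]

theorem commute_twist_row_column (hpq : p ≠ q) {j h : ι} (hjq : j ≠ q) (hjp : j ≠ p) (hhq : h ≠ q)
    (hhp : h ≠ p) (hjh : j ≠ h) (r s : I) :
    Commute (twist y p q c q j r) (twist y p q c h p s) := by
  rw [twist_row, twist_column y _ _ _ hhq]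
  apply commute_mul_mul_of_commutator_mul_eq_one
  · apply hy.commute <;> grind
  · apply hy.commute <;> grind
  · rw [hy.commutator_swap hhp hjp.symm hjh.symm]
    apply hy.commute <;> grind
  · rw [hy.commutator_swap hhq hjq.symm hjh.symm]
    apply hy.commute <;> grind
  · rw [hy.commutator_swap hhp hjp.symm hjh.symm, hy.commutator_swap hhq hjq.symm hjh.symm,
      ← hy.add hjh.symm, mul_smul_comm, neg_mul, smul_mul_assoc, neg_neg, neg_add_cancel,
      hy.map_zero hjh.symm]

theorem twist_commute (hpq : p ≠ q) {i j h k : ι} (hij : i ≠ j) (hhk : h ≠ k) (hjh : j ≠ h)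
    (hik : i ≠ k) (hoff₁ : (i, j) ≠ (q, p)) (hoff₂ : (h, k) ≠ (q, p)) (r s : I) :
    Commute (twist y p q c i j r) (twist y p q c h k s) := by
  by_cases hrc : i = q ∧ k = p
  · obtain ⟨rfl, rfl⟩ := hrc
    apply hy.commute_twist_row_column <;> grind
  by_cases hcr : j = p ∧ h = q
  · obtain ⟨rfl, rfl⟩ := hcr
    apply (hy.commute_twist_row_column _ _ _ _ _ _ _ _ _).symm <;> grind
  simp only [twist]
  split_ifs
  all_goals
    repeat' first | apply Commute.mul_left | apply Commute.mul_right
    all_goals apply hy.commute <;> grind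

theorem twist_commutator (hpq : p ≠ q) {i j k : ι} (hij : i ≠ j) (hjk : j ≠ k) (hik : i ≠ k)
    (hoff₁ : (i, j) ≠ (q, p)) (hoff₂ : (j, k) ≠ (q, p)) (hoff₃ : (i, k) ≠ (q, p)) (r s : I) :
    ⁅twist y p q c i j r, twist y p q c j k s⁆ = twist y p q c i k (r * s) := by
  obtain rfl | hiq := eq_or_ne i q
  · have hpj : p ≠ j := by grind
    have hpk : p ≠ k := by grind
    have hcomm : Commute (y i j r) ⁅y p j (c • r), y j k s⁆ := by
      rw [hy.commutator hpj hjk hpk]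
      apply hy.commute <;> grind
    rw [twist_row, twist_row, twist_of_ne y p i c hij.symm hpk.symm,
      commutator_mul_left_of_commute hcomm, hy.commutator hij hjk hik, hy.commutator hpj hjk hpk,
      smul_mul_assoc, (hy.commute hpk hik hik.symm hpk _ _).eq]
  obtain rfl | hjp := eq_or_ne j p
  · rw [twist_column y j q c hiq, twist_of_ne y j q c hpq hjk.symm,
      twist_of_ne y j q c hiq hjk.symm, commutator_mul_left_eq_of_commute,
      hy.commutator hij hjk hik]
    apply hy.commute <;> grind
  obtain rfl | hjq := eq_or_ne j q
  · have hkp : k ≠ p := by grind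
    rw [twist_row, twist_of_ne y p j c hij hjp, twist_of_ne y p j c hij hkp,
      commutator_mul_right_eq_of_commute, hy.commutator hij hjk hik]
    apply hy.commute <;> grind
  obtain rfl | hkp := eq_or_ne k p
  · rw [twist_column y k q c hiq, twist_column y k q c hjq, twist_of_ne y k q c hiq hjp,
      commutator_mul_right_of_commute, hy.commutator hij hjk hik, hy.commutator hij hjq hiq,
      mul_neg, mul_smul_comm]
    rw [hy.commutator hij hjq hiq]
    apply hy.commute <;> grind
  · simp only [twist_of_ne y p q c, hiq, hjp, hjq, hkp, ne_eq, not_false_eq_true,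
      hy.commutator hij hjk hik]

theorem isSteinbergSystemOff_twist (hpq : p ≠ q) : IsSteinbergSystemOff q p (twist y p q c) where
  ne := hpq.symm
  add := hy.twist_add c
  commute := hy.twist_commute c hpq
  commutator := hy.twist_commutator c hpq

end IsSteinbergSystem

end Twist

namespace NonUnitalSteinbergGroup

theorem closure_x_separated {ι I : Type*} [Add I] [Mul I] [HasCommonRightFactors I] {T : Set ι}
    (hT : T.Nonempty) (hT' : Tᶜ.Nonempty) :
    Subgroup.closure {g | ∃ i j, i ≠ j ∧ (i ∈ T ↔ j ∉ T) ∧ ∃ r, x i j r = g} =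
      (⊤ : Subgroup (NonUnitalSteinbergGroup ι I)) := by
  rw [eq_top_iff, ← closure_range_x, Subgroup.closure_le]
  rintro _ ⟨i, j, hij, r, rfl⟩
  by_cases hsep : i ∈ T ↔ j ∉ T
  · exact Subgroup.subset_closure ⟨i, j, hij, hsep, r, rfl⟩
  obtain ⟨l, hil, hlj⟩ : ∃ l, (i ∈ T ↔ l ∉ T) ∧ (l ∈ T ↔ j ∉ T) := by
    obtain ⟨t, ht⟩ := hT
    obtain ⟨t', ht'⟩ := hT'
    by_cases hi : i ∈ T
    · exact ⟨t', by grind⟩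
    · exact ⟨t, by grind⟩
  have hne_il : i ≠ l := by grind
  have hne_lj : l ≠ j := by grind
  obtain ⟨u, v, rfl⟩ := exists_eq_mul r
  rw [← isSteinbergSystem_x.commutator hne_il hne_lj hij]
  exact Subgroup.commutator_le_self _ <| Subgroup.commutator_mem_commutator
    (Subgroup.subset_closure ⟨i, l, hne_il, hil, u, rfl⟩)
    (Subgroup.subset_closure ⟨l, j, hne_lj, hlj, v, rfl⟩)

theorem hom_ext_of_separated {ι I H : Type*} [Add I] [Mul I] [HasCommonRightFactors I] [Group H]
    {T : Set ι} (hT : T.Nonempty) (hT' : Tᶜ.Nonempty) {f g : NonUnitalSteinbergGroup ι I →* H}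
    (h : ∀ i j, i ≠ j → (i ∈ T ↔ j ∉ T) → ∀ r, f (x i j r) = g (x i j r)) : f = g :=
  MonoidHom.eq_of_eqOn_dense (closure_x_separated hT hT') <| by
    rintro _ ⟨i, j, hij, hsep, r, rfl⟩
    exact h i j hij hsep r

end NonUnitalSteinbergGroup

open NonUnitalSteinbergGroup

theorem exists_separating_set {ι : Type*} (hι : 4 ≤ ENat.card ι) {i j h k : ι} (hjh : j ≠ h)
    (hik : i ≠ k) :
    ∃ T : Set ι, T.Nonempty ∧ Tᶜ.Nonempty ∧ (i ∈ T ↔ j ∈ T) ∧ (h ∈ T ↔ k ∈ T) := by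
  by_cases hshare : h = i ∨ k = j
  · obtain ⟨l, hli, hlj, hl⟩ : ∃ l, l ≠ i ∧ l ≠ j ∧ l ≠ h ∧ l ≠ k := by
      rcases hshare with rfl | rfl
      · obtain ⟨l, hl⟩ := exists_ne_of_four_le_card hι h j k
        exact ⟨l, by grind⟩
      · obtain ⟨l, hl⟩ := exists_ne_of_four_le_card hι i k h
        exact ⟨l, by grind⟩
    exact ⟨{l}, ⟨l, rfl⟩, ⟨i, hli.symm⟩, by grind, by grind⟩
  · exact ⟨{i, j}, ⟨i, by simp⟩, ⟨h, by grind⟩, by simp, by grind⟩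

section Transvection

variable {ι R I : Type*} [CommRing R] [NonUnitalRing I] [Module R I]

/-- The endomorphism `f` of the Steinberg group acts like conjugation by `x_{pq}(c)`. Nothing is
required on the root `(q, p)`, because the remaining root subgroups already generate. -/
structure IsTransvection (p q : ι) (c : R)
    (f : NonUnitalSteinbergGroup ι I →* NonUnitalSteinbergGroup ι I) : Prop where
  row {j : ι} (hjp : j ≠ p) (hjq : j ≠ q) (r : I) : f (x q j r) = x q j r * x p j (c • r)
  column {i : ι} (hip : i ≠ p) (hiq : i ≠ q) (r : I) : f (x i p r) = x i p r * x i q (-(c • r))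
  fixed {i j : ι} (hiq : i ≠ q) (hjp : j ≠ p) (r : I) : f (x i j r) = x i j r

namespace IsTransvection

theorem id (p q : ι) : IsTransvection p q (0 : R)
    (MonoidHom.id (NonUnitalSteinbergGroup ι I)) where
  row hjp _ r := by simp [isSteinbergSystem_x.map_zero hjp.symm]
  column _ hiq r := by simp [isSteinbergSystem_x.map_zero hiq]
  fixed _ _ _ := rfl

variable {p q : ι} {f g : NonUnitalSteinbergGroup ι I →* NonUnitalSteinbergGroup ι I}

theorem comp (hpq : p ≠ q) {c d : R} (hf : IsTransvection p q c f) (hg : IsTransvection p q d g) :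
    IsTransvection p q (c + d) (f.comp g) where
  row hjp hjq r := by
    rw [MonoidHom.comp_apply, hg.row hjp hjq, map_mul, hf.row hjp hjq, hf.fixed hpq hjp, mul_assoc,
      ← isSteinbergSystem_x.add hjp.symm, add_smul]
  column hip hiq r := by
    rw [MonoidHom.comp_apply, hg.column hip hiq, map_mul, hf.column hip hiq,
      hf.fixed hiq hpq.symm, mul_assoc, ← isSteinbergSystem_x.add hiq, add_smul, neg_add]
  fixed hiq hjp r := by
    rw [MonoidHom.comp_apply, hg.fixed hiq hjp, hf.fixed hiq hjp]

variable [HasCommonRightFactors I] (hι : 4 ≤ ENat.card ι)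

include hι in
theorem unique (hpq : p ≠ q) {c : R} (hf : IsTransvection p q c f) (hg : IsTransvection p q c g) :
    f = g := by
  obtain ⟨l, hlp, hlq, -⟩ := exists_ne_of_four_le_card hι p q q
  refine hom_ext_of_separated (T := {l}) ⟨l, rfl⟩ ⟨p, hlp.symm⟩ fun a b hab hsep r => ?_
  rw [Set.mem_singleton_iff, Set.mem_singleton_iff] at hsep
  obtain rfl | haq := eq_or_ne a q
  · rw [hf.row (by grind) hab.symm, hg.row (by grind) hab.symm]
  obtain rfl | hbp := eq_or_ne b p
  · rw [hf.column hab haq, hg.column hab haq]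
  · rw [hf.fixed haq hbp, hg.fixed haq hbp]

include hι in
theorem comp_comm {i j h k : ι} (hij : i ≠ j) (hhk : h ≠ k) (hjh : j ≠ h) (hik : i ≠ k) {c d : R}
    (hf : IsTransvection i j c f) (hg : IsTransvection h k d g) : f.comp g = g.comp f := by
  have hx := isSteinbergSystem_x (ι := ι) (I := I)
  obtain ⟨T, hT, hT', hijT, hhkT⟩ := exists_separating_set hι hjh hik
  refine hom_ext_of_separated hT hT' fun a b hab hsep u => ?_
  rw [MonoidHom.comp_apply, MonoidHom.comp_apply]
  by_cases haj : a = j <;> by_cases hbi : b = i <;> by_cases hak : a = k <;> by_cases hbh : b = h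
  any_goals (exfalso; grind)
  all_goals
    subst_vars
    simp (disch := grind) only [hf.row, hf.column, hf.fixed, hg.row, hg.column, hg.fixed, map_mul]
  · rw [(hx.commute _ _ _ _ _ _).right_comm] <;> grind
  · rw [(hx.commute _ _ _ _ _ _).mul_mul_mul_comm, smul_neg, smul_comm] <;> grind
  · rw [(hx.commute _ _ _ _ _ _).mul_mul_mul_comm, smul_neg, smul_comm] <;> grind
  · rw [(hx.commute _ _ _ _ _ _).right_comm] <;> grind

include hι in
theorem comp_comp {i j k : ι} (hij : i ≠ j) (hjk : j ≠ k) (hik : i ≠ k) {c d : R}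
    {e : NonUnitalSteinbergGroup ι I →* NonUnitalSteinbergGroup ι I}
    (hf : IsTransvection i j c f) (hg : IsTransvection j k d g)
    (he : IsTransvection i k (c * d) e) : f.comp g = e.comp (g.comp f) := by
  have hx := isSteinbergSystem_x (ι := ι) (I := I)
  obtain ⟨l, hli, hlj, hlk⟩ := exists_ne_of_four_le_card hι i j k
  refine hom_ext_of_separated (T := {l}) ⟨l, rfl⟩ ⟨i, hli.symm⟩ fun a b hab hsep u => ?_
  rw [Set.mem_singleton_iff, Set.mem_singleton_iff] at hsep
  simp only [MonoidHom.comp_apply]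
  by_cases haj : a = j <;> by_cases hak : a = k <;> by_cases hbi : b = i <;> by_cases hbj : b = j
  any_goals (exfalso; grind)
  all_goals
    subst_vars
    simp (disch := grind) only [hf.row, hf.column, hf.fixed, hg.row, hg.column, hg.fixed, he.row,
      he.column, he.fixed, map_mul]
  · rw [mul_smul, mul_assoc, (hx.commute _ _ _ _ _ _).eq] <;> grind
  · have hcancel : (c * d) • u = -(d • -(c • u)) := by rw [smul_neg, mul_comm, mul_smul, neg_neg]
    have hcomm : Commute (x a k (d • c • u)) (x a j (-(c • u))) := by apply hx.commute <;> grind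
    rw [hcancel, hx.map_neg hak, smul_neg, neg_neg, ← hcomm.eq, mul_assoc, inv_mul_cancel_left]

end IsTransvection

theorem exists_isTransvection [HasCommonRightFactors I] [IsScalarTower R I I] [SMulCommClass R I I]
    (hι : 4 ≤ ENat.card ι) {p q : ι} (hpq : p ≠ q) (c : R) :
    ∃ f : NonUnitalSteinbergGroup ι I →* NonUnitalSteinbergGroup ι I, IsTransvection p q c f := by
  obtain ⟨z, hz, hzx⟩ := (isSteinbergSystem_x.isSteinbergSystemOff_twist (I := I) c hpq)
    |>.exists_extension hι
  have hlift {i j : ι} (hij : i ≠ j) (hoff : (i, j) ≠ (q, p)) (r : I) :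
      lift hz (x i j r) = twist x p q c i j r := by
    rw [lift_x hz hij, hzx i j hoff]
  refine ⟨lift hz, ?_, ?_, ?_⟩
  · intro j hjp hjq r
    rw [hlift hjq.symm (by grind), twist_row]
  · intro i hip hiq r
    rw [hlift hip (by grind), twist_column _ _ _ _ hiq]
  · intro i j hiq hjp r
    obtain rfl | hij := eq_or_ne i j
    · simp
    · rw [hlift hij (by grind), twist_of_ne _ _ _ _ hiq hjp]

end Transvection

section TransvectionSystem

variable {ι R I : Type*} [CommRing R] [NonUnitalRing I] [Module R I] [HasCommonRightFactors I]
  [IsScalarTower R I I] [SMulCommClass R I I]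

theorem exists_mulAut_isTransvection (hι : 4 ≤ ENat.card ι) {p q : ι} (hpq : p ≠ q) (c : R) :
    ∃ φ : MulAut (NonUnitalSteinbergGroup ι I), IsTransvection p q c φ.toMonoidHom := by
  obtain ⟨f, hf⟩ := exists_isTransvection (I := I) hι hpq c
  obtain ⟨g, hg⟩ := exists_isTransvection (I := I) hι hpq (-c)
  have hgf : g.comp f = MonoidHom.id _ :=
    (neg_add_cancel c ▸ hg.comp hpq hf).unique hι hpq (.id p q)
  have hfg : f.comp g = MonoidHom.id _ :=
    (add_neg_cancel c ▸ hf.comp hpq hg).unique hι hpq (.id p q)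
  exact ⟨f.toMulEquiv g hgf hfg, hf⟩

variable (ι R I) in
theorem exists_isSteinbergSystem_isTransvection (hι : 4 ≤ ENat.card ι) :
    ∃ Q : ι → ι → R → MulAut (NonUnitalSteinbergGroup ι I), IsSteinbergSystem Q ∧
      ∀ p q, p ≠ q → ∀ c, IsTransvection p q c (Q p q c).toMonoidHom := by
  have hex (p q : ι) (c : R) : ∃ φ : MulAut (NonUnitalSteinbergGroup ι I),
      p ≠ q → IsTransvection p q c φ.toMonoidHom := by
    by_cases hpq : p = q
    · exact ⟨1, absurd hpq⟩
    · obtain ⟨φ, hφ⟩ := exists_mulAut_isTransvection (I := I) hι hpq c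
      exact ⟨φ, fun _ => hφ⟩
  choose Q hQ using hex
  refine ⟨Q, ⟨?_, ?_, ?_⟩, fun p q hpq c => hQ p q c hpq⟩
  · intro i j hij r s
    exact MulEquiv.toMonoidHom_injective
      ((hQ i j (r + s) hij).unique hι hij ((hQ i j r hij).comp hij (hQ i j s hij)))
  · intro i j h k hij hhk hjh hik r s
    exact MulEquiv.toMonoidHom_injective
      ((hQ i j r hij).comp_comm hι hij hhk hjh hik (hQ h k s hhk))
  · intro i j k hij hjk hik r s
    rw [commutatorElement_def, mul_inv_eq_iff_eq_mul, mul_inv_eq_iff_eq_mul, mul_assoc]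
    exact MulEquiv.toMonoidHom_injective
      ((hQ i j r hij).comp_comp hι hij hjk hik (hQ j k s hjk) (hQ i k (r * s) hik))

end TransvectionSystem

section Unitization

theorem IsSteinbergSystem.unitization {ι R I H : Type*} [CommRing R] [NonUnitalRing I] [Module R I]
    [Group H] {P : ι → ι → I → H} {Q : ι → ι → R → H}
    (hP : IsSteinbergSystem P) (hQ : IsSteinbergSystem Q)
    (hcomm : ∀ {i j h k}, i ≠ j → h ≠ k → j ≠ h → i ≠ k → ∀ r s, Commute (Q i j r) (P h k s))
    (hQP : ∀ {i j k}, i ≠ j → j ≠ k → i ≠ k → ∀ r s, ⁅Q i j r, P j k s⁆ = P i k (r • s))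
    (hPQ : ∀ {i j k}, i ≠ j → j ≠ k → i ≠ k → ∀ r s, ⁅P i j s, Q j k r⁆ = P i k (r • s)) :
    IsSteinbergSystem fun i j (u : Unitization R I) => P i j u.snd * Q i j u.fst where
  add hij u v := by
    rw [Unitization.snd_add, Unitization.fst_add, hP.add hij, hQ.add hij]
    exact (hcomm hij hij hij.symm hij _ _).symm.mul_mul_mul_comm _ _
  commute hij hhk hjh hik u v :=
    ((hP.commute hij hhk hjh hik _ _).mul_right (hcomm hhk hij hik.symm hjh.symm _ _).symm).mul_left
      ((hcomm hij hhk hjh hik _ _).mul_right (hQ.commute hij hhk hjh hik _ _))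
  commutator {i j k} hij hjk hik u v := by
    rw [commutator_mul_mul_of_commute, hQP hij hjk hik, hQ.commutator hij hjk hik,
      hP.commutator hij hjk hik, hPQ hij hjk hik, ← hP.add hik,
      (hcomm hik hik hik.symm hik _ _).right_comm, ← hP.add hik, Unitization.snd_mul,
      Unitization.fst_mul, add_comm (u.snd * v.snd), add_assoc]
    · rw [hQP hij hjk hik]; exact hP.commute hij hik hij.symm hik _ _
    · rw [hQ.commutator hij hjk hik]; exact (hcomm hik hij hik.symm hij _ _).symm
    · rw [hPQ hij hjk hik]; exact hP.commute hjk hik hik.symm hjk _ _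
    · rw [hQ.commutator hij hjk hik]; exact (hcomm hik hjk hjk.symm hik _ _).symm

theorem toPerm_mul_toPermHom_mul_inv {G : Type*} [Group G] (φ : MulAut G) (g : G) :
    MulAut.toPerm G φ * MulAction.toPermHom G G g * (MulAut.toPerm G φ)⁻¹ =
      MulAction.toPermHom G G (φ g) := by
  ext h
  change φ (g * φ.symm h) = φ g * h
  rw [map_mul, MulEquiv.apply_symm_apply]

theorem commutator_toPerm_toPermHom {G : Type*} [Group G] (φ : MulAut G) (g : G) :
    ⁅MulAut.toPerm G φ, MulAction.toPermHom G G g⁆ = MulAction.toPermHom G G (φ g * g⁻¹) := by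
  rw [commutatorElement_def, toPerm_mul_toPermHom_mul_inv, map_mul, map_inv]

variable {ι R I : Type*} [CommRing R] [NonUnitalRing I] [Module R I]

theorem NonUnitalSteinbergGroup.x_eq_x_inr_mul_x_inl (i j : ι) (u : Unitization R I) :
    (x i j u : NonUnitalSteinbergGroup ι (Unitization R I)) =
      x i j (Unitization.inr u.snd) * x i j (Unitization.inl u.fst) := by
  obtain rfl | hij := eq_or_ne i j
  · simp
  · rw [← isSteinbergSystem_x.add hij, add_comm, Unitization.inl_fst_add_inr_snd_eq]

variable (ι R I) in
/-- The homomorphism of Steinberg groups induced by the inclusion of `I` into its unitization. -/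
noncomputable def inrHom :
    NonUnitalSteinbergGroup ι I →* NonUnitalSteinbergGroup ι (Unitization R I) :=
  map (Unitization.inrNonUnitalAlgHom R I)

@[simp]
theorem inrHom_x (i j : ι) (r : I) : inrHom ι R I (x i j r) = x i j (Unitization.inr r) :=
  map_x _ i j r

theorem x_inr_mem_range_inrHom (i j : ι) (r : I) :
    x i j (Unitization.inr r) ∈ (inrHom ι R I).range :=
  ⟨x i j r, inrHom_x i j r⟩

variable [HasCommonRightFactors I] (hι : 4 ≤ ENat.card ι)
include hι

theorem conj_x_inl_mem_range_inrHom {p q : ι} (hpq : p ≠ q) (c : R)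
    {u : NonUnitalSteinbergGroup ι (Unitization R I)} (hu : u ∈ (inrHom ι R I).range) :
    x p q (Unitization.inl c) * u * (x p q (Unitization.inl c))⁻¹ ∈ (inrHom ι R I).range := by
  have hx := isSteinbergSystem_x (ι := ι) (I := Unitization R I)
  obtain ⟨l, hlp, hlq, -⟩ := exists_ne_of_four_le_card hι p q q
  set g : NonUnitalSteinbergGroup ι (Unitization R I) := x p q (Unitization.inl c)
  suffices ⊤ ≤ (((inrHom ι R I).range.comap (MulAut.conj g).toMonoidHom).comap (inrHom ι R I)) by
    obtain ⟨v, rfl⟩ := hu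
    exact this (Subgroup.mem_top v)
  rw [← closure_x_separated (T := {l}) ⟨l, rfl⟩ ⟨p, hlp.symm⟩, Subgroup.closure_le]
  rintro _ ⟨i, j, hij, hsep, r, rfl⟩
  rw [Set.mem_singleton_iff, Set.mem_singleton_iff] at hsep
  change g * inrHom ι R I (x i j r) * g⁻¹ ∈ (inrHom ι R I).range
  rw [inrHom_x]
  suffices ⁅g, x i j (Unitization.inr r)⁆ ∈ (inrHom ι R I).range by
    simpa [commutatorElement_def] using mul_mem this (x_inr_mem_range_inrHom i j r)
  obtain rfl | hiq := eq_or_ne i q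
  · rw [hx.commutator hpq hij (by grind), Unitization.inl_mul_inr]
    exact x_inr_mem_range_inrHom _ _ _
  obtain rfl | hjp := eq_or_ne j p
  · rw [hx.commutator_swap hij hpq hiq, Unitization.inr_mul_inl, ← Unitization.inr_neg]
    exact x_inr_mem_range_inrHom _ _ _
  · rw [(hx.commute hpq hij hiq.symm hjp.symm _ _).commutator_eq]
    exact one_mem _

theorem range_inrHom_normal : (inrHom ι R I).range.Normal := by
  have hx := isSteinbergSystem_x (ι := ι) (I := Unitization R I)
  rw [← Subgroup.normalizer_eq_top_iff, eq_top_iff, ← closure_range_x, Subgroup.closure_le]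
  rintro _ ⟨i, j, hij, u, rfl⟩
  rw [x_eq_x_inr_mul_x_inl]
  refine mul_mem (Subgroup.le_normalizer (x_inr_mem_range_inrHom i j _))
    (Subgroup.mem_normalizer_iff.2 fun v =>
      ⟨conj_x_inl_mem_range_inrHom hι hij u.fst, fun hv => ?_⟩)
  have hconj := conj_x_inl_mem_range_inrHom hι hij (-u.fst) hv
  rwa [Unitization.inl_neg, hx.map_neg hij, inv_inv, ← mul_assoc, ← mul_assoc, inv_mul_cancel,
    one_mul, inv_mul_cancel_right] at hconj

variable [IsScalarTower R I I] [SMulCommClass R I I]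

open MulAction in
theorem exists_isSteinbergSystem_perm :
    ∃ y : ι → ι → Unitization R I → Equiv.Perm (NonUnitalSteinbergGroup ι I),
      IsSteinbergSystem y ∧
        ∀ i j, i ≠ j → ∀ r, y i j (Unitization.inr r) = toPermHom _ _ (x i j r) := by
  obtain ⟨Q, hQ, htrans⟩ := exists_isSteinbergSystem_isTransvection ι R I hι
  have hx := isSteinbergSystem_x (ι := ι) (I := I)
  have hPerm := hQ.monoidHom_comp (MulAut.toPerm (NonUnitalSteinbergGroup ι I))
  refine ⟨_, (hx.monoidHom_comp (toPermHom _ _)).unitization hPerm ?_ ?_ ?_, ?_⟩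
  · intro i j h k hij _ hjh hik r s
    have hfix : Q i j r (x h k s) = x h k s := (htrans i j hij r).fixed hjh.symm hik.symm s
    rw [← commutatorElement_eq_one_iff_commute, commutator_toPerm_toPermHom, hfix, mul_inv_cancel,
      map_one]
  · intro i j k hij hjk hik r s
    have hrow : Q i j r (x j k s) = x j k s * x i k (r • s) :=
      (htrans i j hij r).row hik.symm hjk.symm s
    rw [commutator_toPerm_toPermHom, hrow, (hx.commute hjk hik hik.symm hjk _ _).mul_inv_cancel]
  · intro i j k hij hjk hik r s
    have hcol : Q j k r (x i j s) = x i j s * x i k (-(r • s)) :=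
      (htrans j k hjk r).column hij hik s
    rw [← commutatorElement_inv, commutator_toPerm_toPermHom, hcol,
      (hx.commute hij hik hij.symm hik _ _).mul_inv_cancel, ← map_inv, hx.map_neg hik, inv_inv]
  · intro i j hij r
    simp [hPerm.map_zero hij]

theorem inrHom_injective : Function.Injective (inrHom ι R I) := by
  obtain ⟨y, hy, hyinr⟩ := exists_isSteinbergSystem_perm (R := R) (I := I) hι
  have hregular : (lift hy).comp (inrHom ι R I) =
      MulAction.toPermHom _ (NonUnitalSteinbergGroup ι I) :=
    hom_ext fun i j hij r => by
      rw [MonoidHom.comp_apply, inrHom_x, lift_x hy hij, hyinr i j hij]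
  refine Function.Injective.of_comp (f := lift hy) ?_
  rw [← MonoidHom.coe_comp, hregular]
  exact MulAction.toPerm_injective

theorem ker_map_fstHom_le_range_inrHom :
    (map (ι := ι) (Unitization.fstHom R I)).ker ≤ (inrHom ι R I).range := by
  intro g hg
  have hnormal := range_inrHom_normal (R := R) (I := I) hι
  have hmk : QuotientGroup.mk' (inrHom ι R I).range =
      ((QuotientGroup.mk' _).comp (map (Unitization.inlRingHom R I))).comp
        (map (Unitization.fstHom R I)) := by
    refine hom_ext fun i j _ u => ?_
    simp only [MonoidHom.comp_apply, map_x]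
    rw [x_eq_x_inr_mul_x_inl, map_mul, QuotientGroup.mk'_apply,
      (QuotientGroup.eq_one_iff _).2 (x_inr_mem_range_inrHom i j _), one_mul]
    rfl
  rw [← QuotientGroup.ker_mk' (inrHom ι R I).range, MonoidHom.mem_ker, hmk, MonoidHom.comp_apply,
    MonoidHom.mem_ker.1 hg, map_one]

end Unitization

theorem eq_one_of_map_fstHom_eq_one_of_map_eq_one {ι D R I : Type*} [CommRing D] [CommRing R]
    [NonUnitalRing I] [HasCommonRightFactors I] [Module D I] [IsScalarTower D I I]
    [SMulCommClass D I I] [Module R I] [IsScalarTower R I I] [SMulCommClass R I I]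
    (hι : 4 ≤ ENat.card ι) {F : Type*} [FunLike F (Unitization D I) (Unitization R I)]
    [AddHomClass F (Unitization D I) (Unitization R I)]
    [MulHomClass F (Unitization D I) (Unitization R I)]
    (θ : F) (hθ : ∀ r : I, θ (Unitization.inr r) = Unitization.inr r)
    {g : NonUnitalSteinbergGroup ι (Unitization D I)} (hfst : map (Unitization.fstHom D I) g = 1)
    (hg : map θ g = 1) : g = 1 := by
  obtain ⟨u, rfl⟩ := ker_map_fstHom_le_range_inrHom hι hfst
  have hu : inrHom ι R I u = 1 := by
    rw [← hg]
    exact (map_map θ (Unitization.inrNonUnitalAlgHom D I) (Unitization.inrNonUnitalAlgHom R I) hθ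
      u).symm
  rw [(map_eq_one_iff _ (inrHom_injective hι)).1 hu, map_one]

section PositiveExponents

theorem isRightRegular_single_one {R G : Type*} [Semiring R] [Add G] [IsRightCancelAdd G] (e : G) :
    IsRightRegular (AddMonoidAlgebra.single e 1 : AddMonoidAlgebra R G) := by
  intro s t hst
  ext q
  have hcoeff (u : AddMonoidAlgebra R G) : (u * .single e 1).coeff (q + e) = u.coeff q := by
    rw [AddMonoidAlgebra.coeff_mul_single_eq_coeff_mul q fun _ _ => add_left_inj e, mul_one]
  rw [← hcoeff s, ← hcoeff t]
  exact congrArg (fun u => u.coeff (q + e)) hst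

variable {R K : Type*} [CommRing R] [AddCommGroup K] [LinearOrder K] [IsOrderedAddMonoid K]

open AddMonoidAlgebra

theorem exists_eq_mul_single_of_lt (t : AddMonoidAlgebra R {q : K // 0 < q})
    (q₀ : {q : K // 0 < q}) :
    ∃ δ : {q : K // 0 < q}, ∀ e < δ, ∃ s, t = s * single e 1 := by
  induction t using AddMonoidAlgebra.induction_linear with
  | zero => exact ⟨q₀, fun e _ => ⟨0, by simp⟩⟩
  | add t t' ht ht' =>
    obtain ⟨δ, hδ⟩ := ht
    obtain ⟨δ', hδ'⟩ := ht'
    refine ⟨min δ δ', fun e he => ?_⟩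
    obtain ⟨s, rfl⟩ := hδ e (he.trans_le (min_le_left _ _))
    obtain ⟨s', rfl⟩ := hδ' e (he.trans_le (min_le_right _ _))
    exact ⟨s + s', (add_mul _ _ _).symm⟩
  | single q r =>
    refine ⟨q, fun e he => ⟨single ⟨q - e, sub_pos.2 he⟩ r, ?_⟩⟩
    rw [single_mul_single, mul_one]
    congr 1
    exact Subtype.ext (sub_add_cancel _ _).symm

instance hasCommonRightFactors_addMonoidAlgebra [DenselyOrdered K] [Nontrivial K] :
    HasCommonRightFactors (AddMonoidAlgebra R {q : K // 0 < q}) where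
  exists_common_factor s t := by
    obtain ⟨q, hq⟩ := exists_zero_lt (α := K)
    obtain ⟨δ, hδ⟩ := exists_eq_mul_single_of_lt s ⟨q, hq⟩
    obtain ⟨δ', hδ'⟩ := exists_eq_mul_single_of_lt t ⟨q, hq⟩
    obtain ⟨e, he₀, he⟩ := exists_between (min δ δ').2
    obtain ⟨s', hs'⟩ := hδ ⟨e, he₀⟩ (lt_of_lt_of_le he (min_le_left δ δ'))
    obtain ⟨t', ht'⟩ := hδ' ⟨e, he₀⟩ (lt_of_lt_of_le he (min_le_right δ δ'))
    exact ⟨_, s', t', isRightRegular_single_one _, hs', ht'⟩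

end PositiveExponents

section ScaledGerm

open Filter

/-- Germs of `D`-valued functions as a `D`-algebra, with `D` embedded as the constants. -/
instance algebraGerm {α D : Type*} [CommRing D] (l : Filter α) : Algebra D (Germ l D) :=
  Algebra.ofModule (fun d u v => by
    induction u, v using Germ.inductionOn₂ with | _ u v
    exact congrArg Germ.ofFun (smul_mul_assoc d u v)) (fun d u v => by
    induction u, v using Germ.inductionOn₂ with | _ u v
    exact congrArg Germ.ofFun (mul_smul_comm d u v))

theorem algebraMap_germ_apply {α D : Type*} [CommRing D] (l : Filter α) (d : D) :
    algebraMap D (Germ l D) d = ((fun _ => d : α → D) : Germ l D) :=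
  Germ.coe_eq.2 (.of_forall fun _ => mul_one d)

variable {α D R : Type*} [CommRing D] [CommRing R] [Algebra D R] (b : D) [IsLocalization.Away b R]

theorem exists_common_denominator (z z' : R) :
    ∃ (r : ℕ) (d d' : D), z * algebraMap D R b ^ r = algebraMap D R d ∧
      z' * algebraMap D R b ^ r = algebraMap D R d' := by
  obtain ⟨r, d, hd⟩ := IsLocalization.Away.surj b z
  obtain ⟨r', d', hd'⟩ := IsLocalization.Away.surj b z'
  refine ⟨r + r', d * b ^ r', d' * b ^ r, ?_, ?_⟩ <;>
    simp only [map_mul, map_pow, ← hd, ← hd'] <;> ring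

variable (l : Filter α)

/-- The germ along `l` of the function `j ↦ z * b ^ e j`, which takes values in `D` as soon as
`e j` exceeds the exponent of a denominator of `z`. -/
noncomputable def scaledGerm (e : α → ℕ) (z : R) : Germ l D :=
  ((fun j => (IsLocalization.Away.sec b z).1 * b ^ (e j - (IsLocalization.Away.sec b z).2) :
    α → D) : Germ l D)

variable {l} {e e' : α → ℕ}

theorem scaledGerm_congr (h : e =ᶠ[l] e') (z : R) :
    scaledGerm b l e z = scaledGerm b l e' z :=
  Germ.coe_eq.2 (h.mono fun j hj => by simp only [hj])

theorem scaledGerm_eq_coe (he : Tendsto e l atTop) {z : R} {r : ℕ} {d : D}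
    (hd : z * algebraMap D R b ^ r = algebraMap D R d) :
    scaledGerm b l e z = ((fun j => d * b ^ (e j - r) : α → D) : Germ l D) := by
  have hsec := IsLocalization.Away.sec_spec b z
  rw [map_pow] at hsec
  set r' := (IsLocalization.Away.sec b z).2 with hr'
  set d' := (IsLocalization.Away.sec b z).1 with hd'
  obtain ⟨s, hs⟩ : ∃ s, b ^ s * (d' * b ^ r) = b ^ s * (d * b ^ r') := by
    refine IsLocalization.Away.exists_of_eq (S := R) b ?_
    rw [map_mul, map_mul, map_pow, map_pow, ← hd, ← hsec]
    ring
  refine Germ.coe_eq.2 ((he.eventually_ge_atTop (r + r' + s)).mono fun j hj => ?_)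
  obtain ⟨k, hk⟩ := Nat.exists_eq_add_of_le hj
  have hsub : e j - r = r' + s + k := by omega
  have hsub' : e j - r' = r + s + k := by omega
  simp only [← hr', ← hd', hsub, hsub']
  linear_combination b ^ k * hs

theorem scaledGerm_algebraMap (he : Tendsto e l atTop) (d : D) :
    scaledGerm b l e (algebraMap D R d) = ((fun j => d * b ^ e j : α → D) : Germ l D) := by
  simpa using scaledGerm_eq_coe b he (z := algebraMap D R d) (r := 0) (by simp)

theorem scaledGerm_add (he : Tendsto e l atTop) (z z' : R) :
    scaledGerm b l e (z + z') = scaledGerm b l e z + scaledGerm b l e z' := by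
  obtain ⟨r, d, d', hd, hd'⟩ := exists_common_denominator b z z'
  rw [scaledGerm_eq_coe b he hd, scaledGerm_eq_coe b he hd',
    scaledGerm_eq_coe b he (r := r) (d := d + d') (by rw [add_mul, hd, hd', map_add])]
  exact Germ.coe_eq.2 (.of_forall fun j => add_mul _ _ _)

theorem scaledGerm_smul (he : Tendsto e l atTop) (c : D) (z : R) :
    scaledGerm b l e (c • z) = c • scaledGerm b l e z := by
  obtain ⟨r, d, hd⟩ := IsLocalization.Away.surj b z
  rw [scaledGerm_eq_coe b he hd, scaledGerm_eq_coe b he (r := r) (d := c • d)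
    (by rw [smul_mul_assoc, hd, smul_eq_mul, map_mul, Algebra.smul_def])]
  exact Germ.coe_eq.2 (.of_forall fun j => smul_mul_assoc _ _ _)

theorem scaledGerm_mul (he : Tendsto e l atTop) (he' : Tendsto e' l atTop) (z z' : R) :
    scaledGerm b l (e + e') (z * z') = scaledGerm b l e z * scaledGerm b l e' z' := by
  obtain ⟨r, d, d', hd, hd'⟩ := exists_common_denominator b z z'
  rw [scaledGerm_eq_coe b he hd, scaledGerm_eq_coe b he' hd',
    scaledGerm_eq_coe b (e := e + e') (he.atTop_add_atTop he') (r := r + r) (d := d * d')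
      (by rw [pow_add, mul_mul_mul_comm, hd, hd', map_mul])]
  refine Germ.coe_eq.2 ?_
  filter_upwards [he.eventually_ge_atTop r, he'.eventually_ge_atTop r] with j hj hj'
  have hsub : (e + e') j - (r + r) = (e j - r) + (e' j - r) := by rw [Pi.add_apply]; omega
  rw [hsub, pow_add, mul_mul_mul_comm]

/-- `scaledGerm` as a linear map. -/
noncomputable def scaledGermLinear (he : Tendsto e l atTop) : R →ₗ[D] Germ l D where
  toFun := scaledGerm b l e
  map_add' := scaledGerm_add b he
  map_smul' := scaledGerm_smul b he

variable {G : Type*} {ε : G → α → ℕ} (hε : ∀ q, Tendsto (ε q) l atTop)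

/-- The linear map sending `z t ^ q` to the germ of `z * b ^ ε q`. -/
noncomputable def scaledGermSum : AddMonoidAlgebra R G →ₗ[D] Germ l D :=
  (Finsupp.lsum D fun q => scaledGermLinear b (hε q)) ∘ₗ
    (AddMonoidAlgebra.coeffLinearEquiv D).toLinearMap

@[simp]
theorem scaledGermSum_single (q : G) (z : R) :
    scaledGermSum b hε (.single q z) = scaledGerm b l (ε q) z :=
  Finsupp.lsum_single D (fun q => scaledGermLinear b (hε q)) q z

theorem scaledGermSum_mul [Add G] (hadd : ∀ p q, ε (p + q) =ᶠ[l] ε p + ε q)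
    (s t : AddMonoidAlgebra R G) :
    scaledGermSum b hε (s * t) = scaledGermSum b hε s * scaledGermSum b hε t := by
  induction s using AddMonoidAlgebra.induction_linear with
  | zero => simp
  | add s s' hs hs' => rw [add_mul, map_add, hs, hs', map_add, add_mul]
  | single p z =>
    induction t using AddMonoidAlgebra.induction_linear with
    | zero => simp
    | add t t' ht ht' => rw [mul_add, map_add, ht, ht', map_add, mul_add]
    | single q z' =>
      rw [AddMonoidAlgebra.single_mul_single, scaledGermSum_single, scaledGermSum_single,
        scaledGermSum_single, scaledGerm_congr b (hadd p q), scaledGerm_mul b (hε p) (hε q)]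

/-- `scaledGermSum` as a homomorphism of non-unital algebras. -/
noncomputable def scaledGermHom [Add G] (hadd : ∀ p q, ε (p + q) =ᶠ[l] ε p + ε q) :
    AddMonoidAlgebra R G →ₙₐ[D] Germ l D where
  __ := scaledGermSum b hε
  map_mul' := scaledGermSum_mul b hε hadd
  map_zero' := map_zero _

variable [AddSemigroup G] (hadd : ∀ p q, ε (p + q) =ᶠ[l] ε p + ε q)

/-- The extension of `scaledGermHom` to a homomorphism of unital algebras. -/
noncomputable def scaledGermAlgHom : Unitization D (AddMonoidAlgebra R G) →ₐ[D] Germ l D :=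
  Unitization.lift (scaledGermHom b hε hadd)

theorem scaledGermAlgHom_inl (d : D) :
    scaledGermAlgHom (R := R) b hε hadd (Unitization.inl d) =
      ((fun _ => d : α → D) : Germ l D) :=
  ((scaledGermAlgHom b hε hadd).commutes d).trans (algebraMap_germ_apply l d)

theorem scaledGermAlgHom_inr_single (q : G) (d : D) :
    scaledGermAlgHom b hε hadd (Unitization.inr (.single q (algebraMap D R d))) =
      ((fun j => d * b ^ ε q j : α → D) : Germ l D) := by
  rw [← scaledGerm_algebraMap (R := R) b (hε q), ← scaledGermSum_single b hε]
  simp [scaledGermAlgHom, scaledGermHom]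

end ScaledGerm

section FactorialExponents

open Filter

/-- The integer `q * j!`; the floor takes effect only for the finitely many `j` for which this is
not yet an integer. -/
def factorialExponent (q : {q : ℚ // 0 < q}) (j : ℕ) : ℕ := ⌊(q : ℚ) * j.factorial⌋₊

theorem factorialExponent_one (j : ℕ) : factorialExponent ⟨1, one_pos⟩ j = j.factorial := by
  rw [factorialExponent, one_mul, Nat.floor_natCast]

theorem eventually_factorialExponent_eq_mul (q : {q : ℚ // 0 < q}) :
    ∀ᶠ j in atTop, (factorialExponent q j : ℚ) = q * j.factorial := by
  filter_upwards [eventually_ge_atTop (q : ℚ).den] with j hj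
  obtain ⟨k, hk⟩ := Nat.dvd_factorial (q : ℚ).den_pos hj
  obtain ⟨m, hm⟩ := Int.eq_ofNat_of_zero_le (Rat.num_pos.2 q.2).le
  have hint : (q : ℚ) * j.factorial = (m * k : ℕ) := by
    rw [hk, Nat.cast_mul, ← mul_assoc, Rat.mul_den_eq_num, hm, Nat.cast_mul]
    rfl
  rw [factorialExponent, hint, Nat.floor_natCast]

theorem factorialExponent_add_eventuallyEq (q q' : {q : ℚ // 0 < q}) :
    factorialExponent (q + q') =ᶠ[atTop] factorialExponent q + factorialExponent q' := by
  filter_upwards [eventually_factorialExponent_eq_mul q, eventually_factorialExponent_eq_mul q',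
    eventually_factorialExponent_eq_mul (q + q')] with j hq hq' hadd
  rw [← Nat.cast_inj (R := ℚ), hadd, Pi.add_apply, Nat.cast_add, hq, hq', ← add_mul]
  rfl

theorem tendsto_factorialExponent (q : {q : ℚ // 0 < q}) :
    Tendsto (factorialExponent q) atTop atTop :=
  tendsto_nat_floor_atTop.comp <|
    (tendsto_natCast_atTop_atTop.comp factorial_tendsto_atTop).const_mul_atTop q.2

end FactorialExponents

section GermHom

open Filter

namespace NonUnitalSteinbergGroup

variable {α ι I : Type*} [Add I] [Mul I] (l : Filter α)

theorem isSteinbergSystem_germ_map_x :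
    IsSteinbergSystem fun (i j : ι) (u : Germ l I) => Germ.map (x i j) u where
  add {i j} hij r s := by
    induction r, s using Germ.inductionOn₂ with | _ r s
    exact Germ.coe_eq.2 (.of_forall fun k => isSteinbergSystem_x.add hij (r k) (s k))
  commute {i j h k} hij hhk hjh hik r s := by
    induction r, s using Germ.inductionOn₂ with | _ r s
    exact Germ.coe_eq.2
      (.of_forall fun c => isSteinbergSystem_x.commute hij hhk hjh hik (r c) (s c))
  commutator {i j k} hij hjk hik r s := by
    induction r, s using Germ.inductionOn₂ with | _ r s
    exact Germ.coe_eq.2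
      (.of_forall fun c => isSteinbergSystem_x.commutator hij hjk hik (r c) (s c))

/-- The canonical homomorphism from the Steinberg group of germs of functions to germs of
functions with values in the Steinberg group. -/
noncomputable def germHom :
    NonUnitalSteinbergGroup ι (Germ l I) →* Germ l (NonUnitalSteinbergGroup ι I) :=
  lift (isSteinbergSystem_germ_map_x l)

variable {S : Type*} [Add S] [Mul S] {F G : Type*} [FunLike F S (Germ l I)]
  [AddHomClass F S (Germ l I)] [MulHomClass F S (Germ l I)] [FunLike G S I] [AddHomClass G S I]
  [MulHomClass G S I]

theorem germHom_map (ψ : F) (f : α → G)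
    (hψ : ∀ s, ψ s = ((fun k => f k s : α → I) : Germ l I)) (g : NonUnitalSteinbergGroup ι S) :
    germHom l (map ψ g) = ((fun k => map (f k) g : α → _) : Germ l (NonUnitalSteinbergGroup ι I)) :=
  suffices (germHom l).comp (map ψ) =
      (Germ.coeMulHom l).comp (MonoidHom.pi fun k => map (f k)) from DFunLike.congr_fun this g
  hom_ext fun i j hij s => by
    rw [MonoidHom.comp_apply, map_x, hψ, germHom, lift_x _ hij]
    exact Germ.coe_eq.2 (.of_forall fun k => (map_x (f k) i j s).symm)

end NonUnitalSteinbergGroup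

end GermHom

section Dilation

open Filter Polynomial

variable {ι A B D R : Type*} [CommRing A] [CommRing B] [CommRing D] [CommRing R] [Algebra D R]
  {c : A →+* D} {c' : B →+* R} {f : A →+* B} {g : NonUnitalSteinbergGroup ι A[X]}

theorem map_eval₂_inr_eq_one {I : Type*} [NonUnitalCommRing I] [HasCommonRightFactors I]
    [Module R I] [IsScalarTower R I I] [SMulCommClass R I I] [Module D I] [IsScalarTower D I I]
    [SMulCommClass D I I] [IsScalarTower D R I] (hι : 4 ≤ ENat.card ι)
    (hc : ∀ a, algebraMap D R (c a) = c' (f a)) (h0 : map (evalRingHom (0 : A)) g = 1)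
    (hf : map (mapRingHom f) g = 1) (t : I) :
    map (eval₂RingHom ((Unitization.inlRingHom D I).comp c) (Unitization.inr t)) g = 1 := by
  let θ : Unitization D I →ₐ[D] Unitization R I :=
    Unitization.lift ((Unitization.inrNonUnitalAlgHom R I).restrictScalars D)
  have hθinr (r : I) : θ (Unitization.inr r) = Unitization.inr r := by simp [θ]
  have hθinl (d : D) : θ (Unitization.inl d) = Unitization.inl (algebraMap D R d) :=
    θ.commutes d
  let evalD := eval₂RingHom ((Unitization.inlRingHom D I).comp c) (Unitization.inr t)
  let evalR := eval₂RingHom ((Unitization.inlRingHom R I).comp c') (Unitization.inr t)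
  have hfst : (Unitization.fstHom D I : Unitization D I →+* D).comp evalD =
      c.comp (evalRingHom 0) :=
    ringHom_ext (fun a => by simp [evalD]) (by simp [evalD])
  have hbase : (θ : Unitization D I →+* Unitization R I).comp evalD = evalR.comp (mapRingHom f) :=
    ringHom_ext (fun a => by simp [evalD, evalR, hθinl, hc]) (by simp [evalD, evalR, hθinr])
  refine eq_one_of_map_fstHom_eq_one_of_map_eq_one hι θ hθinr ?_ ?_
  · rw [map_map _ evalD (c.comp (evalRingHom 0)) (DFunLike.congr_fun hfst),
      ← map_map c (evalRingHom 0) _ fun _ => rfl, h0, map_one]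
  · rw [map_map _ evalD (evalR.comp (mapRingHom f)) (DFunLike.congr_fun hbase),
      ← map_map evalR (mapRingHom f) _ fun _ => rfl, hf, map_one]

theorem scaledGermAlgHom_eval₂ {α G : Type*} [AddCommSemigroup G] {l : Filter α}
    {ε : G → α → ℕ} (b x : D) [IsLocalization.Away b R] (hε : ∀ q, Tendsto (ε q) l atTop)
    (hadd : ∀ p q, ε (p + q) =ᶠ[l] ε p + ε q) (q : G) (p : A[X]) :
    scaledGermAlgHom b hε hadd
        (eval₂RingHom ((Unitization.inlRingHom D (AddMonoidAlgebra R G)).comp c)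
          (Unitization.inr (.single q (algebraMap D R x))) p) =
      ((fun j => eval₂RingHom c (x * b ^ ε q j) p : α → D) : Germ l D) := by
  suffices (scaledGermAlgHom b hε hadd).toRingHom.comp
      (eval₂RingHom ((Unitization.inlRingHom D (AddMonoidAlgebra R G)).comp c)
        (Unitization.inr (.single q (algebraMap D R x)))) =
      (Germ.coeRingHom l).comp (RingHom.pi fun j => eval₂RingHom c (x * b ^ ε q j)) from
    DFunLike.congr_fun this p
  refine ringHom_ext (fun a => ?_) ?_
  · simpa [RingHom.pi] using scaledGermAlgHom_inl (R := R) b hε hadd (c a)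
  · simpa [RingHom.pi] using scaledGermAlgHom_inr_single (R := R) b hε hadd q x

theorem eventually_map_eval₂_eq_one (hι : 4 ≤ ENat.card ι) (b x : D) [IsLocalization.Away b R]
    (hc : ∀ a, algebraMap D R (c a) = c' (f a)) (h0 : map (evalRingHom (0 : A)) g = 1)
    (hf : map (mapRingHom f) g = 1) :
    ∀ᶠ k : ℕ in atTop, map (eval₂RingHom c (x * b ^ k.factorial)) g = 1 := by
  let t : AddMonoidAlgebra R {q : ℚ // 0 < q} := .single ⟨1, one_pos⟩ (algebraMap D R x)
  let evalD := eval₂RingHom ((Unitization.inlRingHom D _).comp c) (Unitization.inr t)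
  let ψ := scaledGermAlgHom (R := R) b tendsto_factorialExponent factorialExponent_add_eventuallyEq
  have hgerm : germHom atTop (map (ψ.toRingHom.comp evalD) g) =
      ((fun k => map (eval₂RingHom c (x * b ^ factorialExponent ⟨1, one_pos⟩ k)) g : ℕ → _) :
        Germ atTop _) :=
    germHom_map atTop _ _ (scaledGermAlgHom_eval₂ b x _ _ _) g
  rw [← map_map ψ evalD _ fun _ => rfl, map_eval₂_inr_eq_one hι hc h0 hf t, map_one, map_one]
    at hgerm
  simp only [factorialExponent_one] at hgerm
  exact Germ.coe_eq.1 hgerm.symm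

attribute [local instance] Polynomial.algebra

theorem isLocalization_away_C_polynomial [Algebra A B] (a : A) [IsLocalization.Away a B] :
    IsLocalization.Away (C a) B[X] := by
  rw [IsLocalization.Away, ← Submonoid.map_powers]
  exact Polynomial.isLocalization (Submonoid.powers a) B

theorem stmt6_general [Algebra A B] (hι : 4 ≤ ENat.card ι) (a : A) [IsLocalization.Away a B]
    (g : NonUnitalSteinbergGroup ι A[X]) (h0 : map (evalRingHom (0 : A)) g = 1)
    (ha : map (mapRingHom (algebraMap A B)) g = 1) :
    ∃ m : ℕ, map (compRingHom (C (a ^ m) * X)) g = 1 := by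
  have := isLocalization_away_C_polynomial (B := B) a
  obtain ⟨k, hk⟩ := (eventually_map_eval₂_eq_one (R := B[X]) (c' := C) hι (C a) X
    (fun _ => map_C (algebraMap A B)) h0 ha).exists
  refine ⟨k.factorial, ?_⟩
  rwa [C_pow, mul_comm]

end Dilation

section SteinbergGroup

variable {n : ℕ} {R S : Type} [CommRing R] [CommRing S]

theorem stRels_iff_steinbergRelation (w : FreeGroup (StGen n R)) :
    StRels n R w ↔ SteinbergRelation (Fin n) R w := by
  constructor <;> rintro (⟨i, j, hij, r, s⟩ | ⟨i, j, h, k, hij, hhk, hjh, hik, r, s⟩ |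
    ⟨i, j, k, hij, hjk, hik, r, s⟩)
  · exact .add i j hij r s
  · exact .commute i j h k hij hhk hjh hik r s
  · exact .commutator i j k hij hjk hik r s
  · exact .add i j hij r s
  · exact .commZero i j h k hij hhk hjh hik r s
  · exact .commAdd i j k hij hjk hik r s

/-- The identification of `SteinbergGroup n R` with the Steinberg group of `R` regarded as a
non-unital ring. -/
def steinbergGroupEquiv (n : ℕ) (R : Type) [CommRing R] :
    SteinbergGroup n R ≃* NonUnitalSteinbergGroup (Fin n) R :=
  QuotientGroup.quotientMulEquivOfEq <|
    congrArg Subgroup.normalClosure (Set.ext stRels_iff_steinbergRelation)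

theorem steinbergGroupEquiv_stx {i j : Fin n} (hij : i ≠ j) (r : R) :
    steinbergGroupEquiv n R (stx n R i j hij r) = x i j r :=
  (x_of_ne hij r).symm

theorem steinbergGroupEquiv_apply (f : R →+* S) (φ : SteinbergGroup n R →* SteinbergGroup n S)
    (hφ : ∀ i j hij r, φ (stx n R i j hij r) = stx n S i j hij (f r)) (g : SteinbergGroup n R) :
    steinbergGroupEquiv n S (φ g) = map f (steinbergGroupEquiv n R g) := by
  suffices (steinbergGroupEquiv n S).toMonoidHom.comp φ =
      (map f).comp (steinbergGroupEquiv n R).toMonoidHom from DFunLike.congr_fun this g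
  refine PresentedGroup.ext fun ⟨⟨⟨i, j⟩, hij⟩, r⟩ => ?_
  change steinbergGroupEquiv n S (φ (stx n R i j hij r)) =
    map f (steinbergGroupEquiv n R (stx n R i j hij r))
  rw [hφ, steinbergGroupEquiv_stx, steinbergGroupEquiv_stx, map_x]

theorem eq_one_iff_map_steinbergGroupEquiv_eq_one (f : R →+* S)
    (φ : SteinbergGroup n R →* SteinbergGroup n S)
    (hφ : ∀ i j hij r, φ (stx n R i j hij r) = stx n S i j hij (f r)) (g : SteinbergGroup n R) :
    φ g = 1 ↔ map f (steinbergGroupEquiv n R g) = 1 := by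
  rw [← steinbergGroupEquiv_apply f φ hφ, map_eq_one_iff _ (steinbergGroupEquiv n S).injective]

end SteinbergGroup

theorem stmt6 (n : ℕ) (hn : 4 ≤ n) : DilationPrinciple n := by
  intro A _ a _ g ev0 hev0 hg0 la hla hga
  have h0 : map (Polynomial.evalRingHom (0 : A)) (steinbergGroupEquiv n _ g) = 1 :=
    (eq_one_iff_map_steinbergGroupEquiv_eq_one _ ev0 hev0 g).1 hg0
  have ha : map (Polynomial.mapRingHom (algebraMap A (Localization.Away a)))
      (steinbergGroupEquiv n _ g) = 1 :=
    (eq_one_iff_map_steinbergGroupEquiv_eq_one _ la hla g).1 hga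
  obtain ⟨m, hm⟩ := stmt6_general (by simpa using hn) a _ h0 ha
  exact ⟨m, fun ev hev => (eq_one_iff_map_steinbergGroupEquiv_eq_one _ ev hev g).2 hm⟩
end

section
/- Let R be a commutative ring, I an ideal of R, and n ≥ 4. The group St*(n,R,I) is generated by the set of elements {F(Me₁, (M⁻¹)ᵗe₂·a) : M ∈ E(n,R), a ∈ I}. -/
/-- The set of elementary transvections inside `GL n R`. -/
def transvectionSet (n : ℕ) (R : Type) [CommRing R] :
    Set (Matrix.GeneralLinearGroup (Fin n) R) :=
  {M | ∃ (i j : Fin n) (_ : i ≠ j) (r : R),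
    (M : Matrix (Fin n) (Fin n) R) = 1 + Matrix.single i j r}

/-- The elementary subgroup `E(n, R) ≤ GL(n, R)`. -/
def Elem (n : ℕ) (R : Type) [CommRing R] : Subgroup (Matrix.GeneralLinearGroup (Fin n) R) :=
  Subgroup.closure (transvectionSet n R)

/-- The set `E(n,R)e₁` of first columns of elementary matrices. -/
def Ecol (n : ℕ) (R : Type) [CommRing R] [NeZero n] : Set (Fin n → R) :=
  {u | ∃ M ∈ Elem n R, u = fun i => (M : Matrix (Fin n) (Fin n) R) i 0}

/-- The matrix `t(u, v) = 1 + u·vᵗ`. -/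
def tMat {n : ℕ} {R : Type} [CommRing R] (u v : Fin n → R) : Matrix (Fin n) (Fin n) R :=
  1 + Matrix.vecMulVec u v

/-- The `k`-th column of an invertible matrix. -/
def colM {n : ℕ} {R : Type} [CommRing R] (M : Matrix.GeneralLinearGroup (Fin n) R)
    (k : Fin n) : Fin n → R :=
  fun i => (M : Matrix (Fin n) (Fin n) R) i k

/-- The `k`-th column of the contragredient matrix `M* = (Mᵗ)⁻¹ = (M⁻¹)ᵗ`. -/
def starCol {n : ℕ} {R : Type} [CommRing R] (M : Matrix.GeneralLinearGroup (Fin n) R)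
    (k : Fin n) : Fin n → R :=
  fun i => ((M⁻¹ : Matrix.GeneralLinearGroup (Fin n) R) : Matrix (Fin n) (Fin n) R) k i

/-- Unimodularity of the `n × 2` matrix with columns `u`, `w`: it admits a left inverse. -/
def Unimodular2 {n : ℕ} {R : Type} [CommRing R] (u w : Fin n → R) : Prop :=
  ∃ x y : Fin n → R,
    dotProduct x u = 1 ∧ dotProduct x w = 0 ∧
    dotProduct y u = 0 ∧ dotProduct y w = 1
/-- Generators `F(u,v)` and `S(u,v)` of the group `St*(n, R, I)`. -/
inductive StarGen (n : ℕ) (R : Type) [CommRing R] [NeZero n] (I : Ideal R) : Type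
  | F (u v : Fin n → R) (hu : u ∈ Ecol n R) (hv : ∀ i, v i ∈ I)
      (ho : dotProduct u v = 0) : StarGen n R I
  | S (u v : Fin n → R) (hu : ∀ i, u i ∈ I) (hv : v ∈ Ecol n R)
      (ho : dotProduct u v = 0) : StarGen n R I

/-- The relations (R1)–(R4) of the group `St*(n, R, I)`. -/
inductive StarRels (n : ℕ) (R : Type) [CommRing R] [NeZero n] (I : Ideal R) :
    FreeGroup (StarGen n R I) → Prop
  | addF (u v w : Fin n → R) (hu : u ∈ Ecol n R) (hv : ∀ i, v i ∈ I) (hw : ∀ i, w i ∈ I)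
      (hvw : ∀ i, (v + w) i ∈ I) (o1 : dotProduct u v = 0)
      (o2 : dotProduct u w = 0) (o3 : dotProduct u (v + w) = 0) :
      StarRels n R I ((FreeGroup.of (StarGen.F u v hu hv o1) : FreeGroup (StarGen n R I)) *
        FreeGroup.of (StarGen.F u w hu hw o2) * (FreeGroup.of (StarGen.F u (v + w) hu hvw o3))⁻¹)
  | addS (u w v : Fin n → R) (hu : ∀ i, u i ∈ I) (hw : ∀ i, w i ∈ I)
      (huw : ∀ i, (u + w) i ∈ I) (hv : v ∈ Ecol n R) (o1 : dotProduct u v = 0)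
      (o2 : dotProduct w v = 0) (o3 : dotProduct (u + w) v = 0) :
      StarRels n R I ((FreeGroup.of (StarGen.S u v hu hv o1) : FreeGroup (StarGen n R I)) *
        FreeGroup.of (StarGen.S w v hw hv o2) * (FreeGroup.of (StarGen.S (u + w) v huw hv o3))⁻¹)
  | conjF (u v u' v' : Fin n → R) (hu : u ∈ Ecol n R) (hv : ∀ i, v i ∈ I)
      (o1 : dotProduct u v = 0) (hu' : u' ∈ Ecol n R) (hv' : ∀ i, v' i ∈ I)
      (o2 : dotProduct u' v' = 0)
      (hu'' : Matrix.mulVec (tMat u v) u' ∈ Ecol n R)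
      (hv'' : ∀ i, Matrix.mulVec (1 - Matrix.vecMulVec v u) v' i ∈ I)
      (o3 : dotProduct (Matrix.mulVec (tMat u v) u')
        (Matrix.mulVec (1 - Matrix.vecMulVec v u) v') = 0) :
      StarRels n R I ((FreeGroup.of (StarGen.F u v hu hv o1) : FreeGroup (StarGen n R I)) *
        FreeGroup.of (StarGen.F u' v' hu' hv' o2) * (FreeGroup.of (StarGen.F u v hu hv o1))⁻¹ *
        (FreeGroup.of (StarGen.F (Matrix.mulVec (tMat u v) u')
          (Matrix.mulVec (1 - Matrix.vecMulVec v u) v') hu'' hv'' o3))⁻¹)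
  | coinc (M : Matrix.GeneralLinearGroup (Fin n) R) (hM : M ∈ Elem n R) (a : R) (ha : a ∈ I)
      (h1 : colM M 0 ∈ Ecol n R) (h2 : ∀ i, (a • starCol M 1) i ∈ I)
      (h3 : dotProduct (colM M 0) (a • starCol M 1) = 0)
      (h4 : ∀ i, (a • colM M 0) i ∈ I) (h5 : starCol M 1 ∈ Ecol n R)
      (h6 : dotProduct (a • colM M 0) (starCol M 1) = 0) :
      StarRels n R I ((FreeGroup.of (StarGen.F (colM M 0) (a • starCol M 1) h1 h2 h3) :
          FreeGroup (StarGen n R I)) *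
        (FreeGroup.of (StarGen.S (a • colM M 0) (starCol M 1) h4 h5 h6))⁻¹)

/-- The group `St*(n, R, I)`. -/
abbrev StStar (n : ℕ) (R : Type) [CommRing R] [NeZero n] (I : Ideal R) : Type :=
  PresentedGroup {w | StarRels n R I w}

/-!
Let `u = M e₁` and write `M* = (M⁻¹)ᵗ`. The columns of `M*` are the basis dual to the columns of
`M`, so a vector `v ∈ Iⁿ` orthogonal to `u` is a sum of multiples `M* eₖ · a` with `k ≠ 1` and
`a ∈ I`, and additivity reduces everything to `F(M e₁, M* eₖ · a)` and `S(M* eₖ · a, M e₁)`.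
A signed swap of the columns `2` and `k`, which is a product of transvections, turns the first of
these into a generator with `k = 2`. For the second one, `M*` again lies in `E(n, R)`; a signed swap
of its first two columns produces `N ∈ E(n, R)` with `N e₁ = -M* e₂` and `N* e₂ = M e₁`, and then
(R4) identifies `S(M* e₂ · a, M e₁)` with `F(N e₁, N* e₂ · (-a))`.
-/

open Matrix

section ElementaryGroup

variable {n : ℕ} {R : Type} [CommRing R] {i j k : Fin n}

/-- The elementary transvection `t_{ij}(r)` as an element of `GL(n, R)`. -/
def elemTransvection (hij : i ≠ j) (r : R) : GL (Fin n) R :=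
  (SpecialLinearGroup.transvection hij r).toGL

/-- The contragredient automorphism `M ↦ M* = (M⁻¹)ᵗ` of `GL(n, R)`, whose columns are the vectors
`starCol M k`. -/
def contragredient : GL (Fin n) R →* GL (Fin n) R where
  toFun M := ⟨(M⁻¹).valᵀ, M.valᵀ, by rw [← transpose_mul, M.mul_inv, transpose_one],
    by rw [← transpose_mul, M.inv_mul, transpose_one]⟩
  map_one' := Units.ext (by simp)
  map_mul' M N := Units.ext (by simp only [_root_.mul_inv_rev, Units.val_mul, transpose_mul])

theorem elemTransvection_mem_Elem (hij : i ≠ j) (r : R) : elemTransvection hij r ∈ Elem n R :=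
  Subgroup.subset_closure ⟨i, j, hij, r, rfl⟩

theorem elemTransvection_inv (hij : i ≠ j) (r : R) :
    (elemTransvection hij r)⁻¹ = elemTransvection hij (-r) := by
  rw [elemTransvection, ← map_inv, SpecialLinearGroup.transvection_inv, elemTransvection]

theorem contragredient_elemTransvection (hij : i ≠ j) (r : R) :
    contragredient (elemTransvection hij r) = elemTransvection hij.symm (-r) := by
  refine Units.ext ?_
  change ((elemTransvection hij r)⁻¹).valᵀ = transvection j i (-r)
  rw [elemTransvection_inv]
  change (transvection i j (-r))ᵀ = transvection j i (-r)
  simp [transvection]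

theorem contragredient_mem_Elem {M : GL (Fin n) R} (hM : M ∈ Elem n R) :
    contragredient M ∈ Elem n R := by
  suffices Elem n R ≤ (Elem n R).comap contragredient from this hM
  refine (Subgroup.closure_le _).mpr ?_
  rintro T ⟨i, j, hij, r, hT⟩
  obtain rfl : T = elemTransvection hij r := Units.ext hT
  rw [SetLike.mem_coe, Subgroup.mem_comap, contragredient_elemTransvection]
  exact elemTransvection_mem_Elem _ _

theorem colM_contragredient (M : GL (Fin n) R) : colM (contragredient M) = starCol M := rfl

theorem starCol_contragredient (M : GL (Fin n) R) : starCol (contragredient M) = colM M := rfl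

theorem colM_mul_elemTransvection (M : GL (Fin n) R) (hij : i ≠ j) (r : R) :
    colM (M * elemTransvection hij r) =
      Function.update (colM M) j (colM M j + r • colM M i) := by
  funext k x
  change (M.val * transvection i j r) x k = _
  obtain rfl | hk := eq_or_ne k j
  · simp [colM]
  · simp [colM, hk]

theorem starCol_mul_elemTransvection (M : GL (Fin n) R) (hij : i ≠ j) (r : R) :
    starCol (M * elemTransvection hij r) =
      Function.update (starCol M) i (starCol M i - r • starCol M j) := by
  rw [← colM_contragredient, map_mul, contragredient_elemTransvection, colM_mul_elemTransvection,
    colM_contragredient, neg_smul, sub_eq_add_neg]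

/-- The product `t_{ij}(1) t_{ji}(-1) t_{ij}(1)`: the matrix which sends `eⱼ` to `eᵢ` and `eᵢ` to
`-eⱼ`, and fixes the other basis vectors. -/
def signedSwap (R : Type) [CommRing R] (hij : i ≠ j) : GL (Fin n) R :=
  elemTransvection hij 1 * elemTransvection hij.symm (-1) * elemTransvection hij 1

theorem signedSwap_mem_Elem (hij : i ≠ j) : signedSwap R hij ∈ Elem n R :=
  mul_mem (mul_mem (elemTransvection_mem_Elem _ _) (elemTransvection_mem_Elem _ _))
    (elemTransvection_mem_Elem _ _)

theorem colM_mul_signedSwap_left (M : GL (Fin n) R) (hij : i ≠ j) :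
    colM (M * signedSwap R hij) i = -colM M j := by
  simp [signedSwap, ← mul_assoc, colM_mul_elemTransvection, hij, hij.symm]

theorem colM_mul_signedSwap_of_ne (M : GL (Fin n) R) (hij : i ≠ j) (hki : k ≠ i) (hkj : k ≠ j) :
    colM (M * signedSwap R hij) k = colM M k := by
  simp [signedSwap, ← mul_assoc, colM_mul_elemTransvection, hki, hkj]

theorem starCol_mul_signedSwap_right (M : GL (Fin n) R) (hij : i ≠ j) :
    starCol (M * signedSwap R hij) j = starCol M i := by
  simp [signedSwap, ← mul_assoc, starCol_mul_elemTransvection, hij, hij.symm]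

theorem exists_mem_Elem_colM_eq_starCol_eq {M : GL (Fin n) R} (hM : M ∈ Elem n R)
    (hji : j ≠ i) (hki : k ≠ i) :
    ∃ N ∈ Elem n R, colM N i = colM M i ∧ starCol N j = starCol M k := by
  obtain rfl | hkj := eq_or_ne k j
  · exact ⟨M, hM, rfl, rfl⟩
  · exact ⟨M * signedSwap R hkj, mul_mem hM (signedSwap_mem_Elem hkj),
      colM_mul_signedSwap_of_ne M hkj hki.symm hji.symm, starCol_mul_signedSwap_right M hkj⟩

theorem exists_mem_Elem_colM_eq_neg_starCol {M : GL (Fin n) R} (hM : M ∈ Elem n R)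
    (hji : j ≠ i) (hki : k ≠ i) :
    ∃ N ∈ Elem n R, colM N i = -starCol M k ∧ starCol N j = colM M i := by
  obtain ⟨P, hP, hcol, hstar⟩ := exists_mem_Elem_colM_eq_starCol_eq hM hji hki
  refine ⟨contragredient P * signedSwap R hji.symm,
    mul_mem (contragredient_mem_Elem hP) (signedSwap_mem_Elem _), ?_, ?_⟩
  · rw [colM_mul_signedSwap_left, colM_contragredient, hstar]
  · rw [starCol_mul_signedSwap_right, starCol_contragredient, hcol]

end ElementaryGroup

section DualBasis

variable {n : ℕ} {R : Type} [CommRing R]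

theorem colM_dotProduct_starCol_of_ne (M : GL (Fin n) R) {i k : Fin n} (hki : k ≠ i) :
    colM M i ⬝ᵥ starCol M k = 0 := by
  have hentry : ((M⁻¹).val * M.val) k i = 0 := by rw [M.inv_mul, one_apply_ne hki]
  rwa [dotProduct_comm]

theorem sum_colM_dotProduct_smul_starCol (M : GL (Fin n) R) (v : Fin n → R) :
    ∑ k, (colM M k ⬝ᵥ v) • starCol M k = v :=
  calc ∑ k, (colM M k ⬝ᵥ v) • starCol M k = (v ᵥ* M.val) ᵥ* (M⁻¹).val := by
        rw [vecMul_eq_sum]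
        exact Finset.sum_congr rfl fun k _ => by rw [dotProduct_comm]; rfl
    _ = v := by rw [vecMul_vecMul, M.mul_inv, vecMul_one]

theorem dotProduct_mem_of_right {I : Ideal R} (u : Fin n → R) {v : Fin n → R}
    (hv : ∀ i, v i ∈ I) : u ⬝ᵥ v ∈ I :=
  I.sum_mem fun i _ => I.mul_mem_left _ (hv i)

/-- The submodule of vectors with entries in `I` that are orthogonal to `u`: the admissible second
arguments of `F(u, ·)`, and also the admissible first arguments of `S(·, u)`. -/
def orthogonalIn (I : Ideal R) (u : Fin n → R) : Submodule R (Fin n → R) where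
  carrier := {v | (∀ i, v i ∈ I) ∧ u ⬝ᵥ v = 0}
  zero_mem' := ⟨fun _ => I.zero_mem, dotProduct_zero u⟩
  add_mem' hv hw := ⟨fun i => I.add_mem (hv.1 i) (hw.1 i), by
    rw [dotProduct_add, hv.2, hw.2, add_zero]⟩
  smul_mem' c v hv := ⟨fun i => I.mul_mem_left c (hv.1 i), by
    rw [dotProduct_smul, hv.2, smul_zero]⟩

theorem smul_starCol_mem_orthogonalIn {I : Ideal R} (M : GL (Fin n) R) {i k : Fin n}
    (hki : k ≠ i) {a : R} (ha : a ∈ I) : a • starCol M k ∈ orthogonalIn I (colM M i) :=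
  ⟨fun _ => I.mul_mem_right _ ha, by
    rw [dotProduct_smul, colM_dotProduct_starCol_of_ne M hki, smul_zero]⟩

theorem orthogonalIn_colM_induction {I : Ideal R} (M : GL (Fin n) R) (i : Fin n)
    {p : (Fin n → R) → Prop} (zero : p 0)
    (add : ∀ v ∈ orthogonalIn I (colM M i), ∀ w ∈ orthogonalIn I (colM M i),
      p v → p w → p (v + w))
    (smul_starCol : ∀ a ∈ I, ∀ k ≠ i, p (a • starCol M k))
    {v : Fin n → R} (hv : v ∈ orthogonalIn I (colM M i)) : p v := by
  suffices v ∈ orthogonalIn I (colM M i) ∧ p v from this.2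
  rw [← sum_colM_dotProduct_smul_starCol M v]
  refine Finset.sum_induction _ (fun w => w ∈ orthogonalIn I (colM M i) ∧ p w)
    (fun v w hv hw => ⟨add_mem hv.1 hw.1, add v hv.1 w hw.1 hv.2 hw.2⟩) ⟨zero_mem _, zero⟩ ?_
  intro k _
  obtain rfl | hki := eq_or_ne k i
  · rw [hv.2, zero_smul]
    exact ⟨zero_mem _, zero⟩
  · have hcoeff : colM M k ⬝ᵥ v ∈ I := dotProduct_mem_of_right _ hv.1
    exact ⟨smul_starCol_mem_orthogonalIn M hki hcoeff, smul_starCol _ hcoeff k hki⟩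

end DualBasis

theorem fin_one_ne_zero_of_ne_zero {n : ℕ} [NeZero n] {k : Fin n} (hk : k ≠ 0) :
    (1 : Fin n) ≠ 0 := by
  rw [Ne, Fin.one_eq_zero_iff]
  rintro rfl
  exact hk (Subsingleton.elim k 0)

namespace StStar

variable {n : ℕ} {R : Type} [CommRing R] [NeZero n] {I : Ideal R} {u v w : Fin n → R}

/-- The element `F(u, v)` of `St*(n, R, I)`. -/
def F (hu : u ∈ Ecol n R) (hv : v ∈ orthogonalIn I u) : StStar n R I :=
  PresentedGroup.of (.F u v hu hv.1 hv.2)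

/-- The element `S(v, u)` of `St*(n, R, I)`. The hypotheses come in the same order as those of
`StStar.F`, so that `u` is the column of an elementary matrix in both. -/
def S (hu : u ∈ Ecol n R) (hv : v ∈ orthogonalIn I u) : StStar n R I :=
  PresentedGroup.of (.S v u hv.1 hu (by rw [dotProduct_comm, hv.2]))

theorem F_add (hu : u ∈ Ecol n R) (hv : v ∈ orthogonalIn I u) (hw : w ∈ orthogonalIn I u) :
    F hu (add_mem hv hw) = F hu hv * F hu hw :=
  (PresentedGroup.mk_eq_mk_of_mul_inv_mem (rels := {w | StarRels n R I w})
    (.addF u v w hu hv.1 hw.1 (add_mem hv hw).1 hv.2 hw.2 (add_mem hv hw).2)).symm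

theorem S_add (hu : u ∈ Ecol n R) (hv : v ∈ orthogonalIn I u) (hw : w ∈ orthogonalIn I u) :
    S hu (add_mem hv hw) = S hu hv * S hu hw :=
  (PresentedGroup.mk_eq_mk_of_mul_inv_mem (rels := {w | StarRels n R I w})
    (.addS v w u hv.1 hw.1 (add_mem hv hw).1 hu _ _ _)).symm

theorem F_zero (hu : u ∈ Ecol n R) : F hu (zero_mem (orthogonalIn I u)) = 1 := by
  have hadd := F_add hu (zero_mem (orthogonalIn I u)) (zero_mem _)
  simpa only [add_zero, left_eq_mul] using hadd

theorem S_zero (hu : u ∈ Ecol n R) : S hu (zero_mem (orthogonalIn I u)) = 1 := by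
  have hadd := S_add hu (zero_mem (orthogonalIn I u)) (zero_mem _)
  simpa only [add_zero, left_eq_mul] using hadd

theorem F_eq_S {M : GL (Fin n) R} (hM : M ∈ Elem n R) {a : R} (ha : a ∈ I)
    (hu : colM M 0 ∈ Ecol n R) (hv : a • starCol M 1 ∈ orthogonalIn I (colM M 0))
    (hv' : starCol M 1 ∈ Ecol n R) (hu' : a • colM M 0 ∈ orthogonalIn I (starCol M 1)) :
    F hu hv = S hv' hu' :=
  PresentedGroup.mk_eq_mk_of_mul_inv_mem (rels := {w | StarRels n R I w})
    (.coinc M hM a ha hu hv.1 hv.2 hu'.1 hv' _)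

/-- The elements `F(M e₁, M* e₂ · a)` with `M ∈ E(n, R)` and `a ∈ I`. If `n = 1`, the index `1`
wraps around to `0`; orthogonality then forces the second argument to vanish. -/
def basicGenerators (n : ℕ) (R : Type) [CommRing R] [NeZero n] (I : Ideal R) :
    Set (StStar n R I) :=
  {g | ∃ (M : GL (Fin n) R) (_ : M ∈ Elem n R) (a : R) (_ : a ∈ I) (h1 : colM M 0 ∈ Ecol n R)
    (h2 : ∀ i, (a • starCol M 1) i ∈ I) (h3 : colM M 0 ⬝ᵥ (a • starCol M 1) = 0),
    g = PresentedGroup.of (StarGen.F (colM M 0) (a • starCol M 1) h1 h2 h3)}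

theorem F_starCol_one_mem_basicGenerators {M : GL (Fin n) R} (hM : M ∈ Elem n R) {a : R}
    (ha : a ∈ I) (hu : colM M 0 ∈ Ecol n R)
    (hv : a • starCol M 1 ∈ orthogonalIn I (colM M 0)) : F hu hv ∈ basicGenerators n R I :=
  ⟨M, hM, a, ha, hu, hv.1, hv.2, rfl⟩

theorem F_smul_starCol_mem_closure {M : GL (Fin n) R} (hM : M ∈ Elem n R) {a : R} (ha : a ∈ I)
    {k : Fin n} (hk : k ≠ 0) (hu : colM M 0 ∈ Ecol n R)
    (hv : a • starCol M k ∈ orthogonalIn I (colM M 0)) :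
    F hu hv ∈ Subgroup.closure (basicGenerators n R I) := by
  obtain ⟨N, hN, hcol, hstar⟩ :=
    exists_mem_Elem_colM_eq_starCol_eq hM (fin_one_ne_zero_of_ne_zero hk) hk
  simp only [← hcol, ← hstar]
  exact Subgroup.subset_closure (F_starCol_one_mem_basicGenerators hN ha _ _)

theorem S_smul_starCol_mem_closure {M : GL (Fin n) R} (hM : M ∈ Elem n R) {a : R} (ha : a ∈ I)
    {k : Fin n} (hk : k ≠ 0) (hu : colM M 0 ∈ Ecol n R)
    (hv : a • starCol M k ∈ orthogonalIn I (colM M 0)) :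
    S hu hv ∈ Subgroup.closure (basicGenerators n R I) := by
  have h10 := fin_one_ne_zero_of_ne_zero hk
  obtain ⟨N, hN, hcol, hstar⟩ := exists_mem_Elem_colM_eq_neg_starCol hM h10 hk
  have hsmul : a • starCol M k = (-a) • colM N 0 := by rw [hcol, smul_neg, neg_smul, neg_neg]
  simp only [hsmul, ← hstar]
  rw [← F_eq_S hN (neg_mem ha) ⟨N, hN, rfl⟩ (smul_starCol_mem_orthogonalIn N h10 (neg_mem ha))]
  exact Subgroup.subset_closure (F_starCol_one_mem_basicGenerators hN (neg_mem ha) _ _)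

theorem F_mem_closure_basicGenerators (hu : u ∈ Ecol n R) (hv : v ∈ orthogonalIn I u) :
    F hu hv ∈ Subgroup.closure (basicGenerators n R I) := by
  obtain ⟨M, hM, rfl⟩ := id hu
  refine orthogonalIn_colM_induction M 0
    (p := fun v => ∀ hv : v ∈ orthogonalIn I (colM M 0), F hu hv ∈ Subgroup.closure _)
    (fun _ => ?_) (fun v hv w hw hFv hFw _ => ?_)
    (fun a ha k hk => F_smul_starCol_mem_closure hM ha hk hu) hv hv
  · rw [F_zero]
    exact one_mem _
  · rw [F_add hu hv hw]
    exact mul_mem (hFv hv) (hFw hw)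

theorem S_mem_closure_basicGenerators (hu : u ∈ Ecol n R) (hv : v ∈ orthogonalIn I u) :
    S hu hv ∈ Subgroup.closure (basicGenerators n R I) := by
  obtain ⟨M, hM, rfl⟩ := id hu
  refine orthogonalIn_colM_induction M 0
    (p := fun v => ∀ hv : v ∈ orthogonalIn I (colM M 0), S hu hv ∈ Subgroup.closure _)
    (fun _ => ?_) (fun v hv w hw hSv hSw _ => ?_)
    (fun a ha k hk => S_smul_starCol_mem_closure hM ha hk hu) hv hv
  · rw [S_zero]
    exact one_mem _
  · rw [S_add hu hv hw]
    exact mul_mem (hSv hv) (hSw hw)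

end StStar

theorem stmt9_general (n : ℕ) [NeZero n] (R : Type) [CommRing R] (I : Ideal R) :
    Subgroup.closure (StStar.basicGenerators n R I) = ⊤ := by
  refine (Subgroup.eq_top_iff' _).mpr (PresentedGroup.generated_by _ _ ?_)
  rintro (⟨u, v, hu, hv, ho⟩ | ⟨v, u, hv, hu, ho⟩)
  · exact StStar.F_mem_closure_basicGenerators hu ⟨hv, ho⟩
  · exact StStar.S_mem_closure_basicGenerators hu ⟨hv, by rw [dotProduct_comm, ho]⟩

theorem stmt9 (n : ℕ) (hn : 4 ≤ n) [NeZero n] (R : Type) [CommRing R] (I : Ideal R) :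
    Subgroup.closure
      {g : StStar n R I | ∃ (M : Matrix.GeneralLinearGroup (Fin n) R) (_ : M ∈ Elem n R)
        (a : R) (_ : a ∈ I) (h1 : colM M 0 ∈ Ecol n R) (h2 : ∀ i, (a • starCol M 1) i ∈ I)
        (h3 : dotProduct (colM M 0) (a • starCol M 1) = 0),
        g = PresentedGroup.of (StarGen.F (colM M 0) (a • starCol M 1) h1 h2 h3)} = ⊤ := by
  exact stmt9_general n R I
end
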